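/- arXiv:1003.1691 — 2 statements merged into one kernel-verified Lean document; each statement's English description precedes it below -/
import Mathlib

section
/- Let α be a composition of length n, λ = (λ_1) a partition with a single part, 0 ≤ k ≤ 1, and λ_1 − k ≤ n. Then s_{S(λ^t, α; k)} − s_{S(λ, α; k)} is Schur-positive, where λ^t = (1^{λ_1}) is the transpose of λ. -/
/-!
Write `R` for the diagram with the row below the rotated staircase and `C` for the one with the
column below it. The proof expands both skew Schur functions into Schur functions and compares the
index sets of the two sums.

The expansion is the Littlewood–Richardson rule, proved by the argument of Stembridge. Call a
tableau *good* when the content of its restriction to the columns `≥ j` is weakly decreasing for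
every `j` (`Good`). In finitely many variables, multiply a skew Schur polynomial by the alternant
`a_ρ`; because Schur polynomials are symmetric, the product is the sum of the alternants
`a_{ρ + content T}` over all tableaux `T` (`alt_mul_schurPoly`). If `T` is not good, take the
rightmost column `j` at which the content inequality fails, and the smallest `k` for which it fails
there. A Bender–Knuth move on the columns left of `j` (`bk`) exchanges the exponents `k` and `k + 1`
of `ρ + content T` and keeps the violation, so the alternants of these tableaux cancel in pairs
(`sum_bad`). A straight shape has exactly one good tableau, hence `a_ρ s_ν = a_{ρ + ν}`
(`alt_mul_straight`). Cancelling `a_ρ` yields `schurOf_expand`: the skew Schur function of a convex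
diagram is the sum of the Schur functions of the contents of its good tableaux.

For the comparison, goodness forces every column of the staircase in `R` to be filled with
`0, 1, 2, …` (`Setup.canon`), and it forces the bottom row of `R` to be strictly increasing
(`Setup.strict`), since the staircase columns have pairwise different lengths. The bottom row can
therefore be turned into the column of `C`. The result is again a good tableau with the same content
(`Setup.exists_turn`), and the construction is injective. So the difference of the two Schur
functions is the sum of the Schur functions belonging to the good tableaux of shape `C` that do not
arise in this way (`Setup.schurPositive`).
-/

open Finset

/-- A diagram is a finite set of cells `(row, column)`. -/
abbrev Diagram := Finset (ℕ × ℕ)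

def ht (D : Diagram) : ℕ := D.sup (fun c => c.1 + 1)
def wd (D : Diagram) : ℕ := D.sup (fun c => c.2 + 1)

/-- A semistandard Young tableau of shape `D` (entries are 0-based: the paper's
value `v` corresponds to the entry `v - 1`). -/
structure SSYT (D : Diagram) where
  entry : ℕ × ℕ → ℕ
  rowWeak : ∀ i j, (i, j) ∈ D → (i, j + 1) ∈ D → entry (i, j) ≤ entry (i, j + 1)
  colStrict : ∀ i j, (i, j) ∈ D → (i + 1, j) ∈ D → entry (i, j) < entry (i + 1, j)
  zero_outside : ∀ c, c ∉ D → entry c = 0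

/-- The content of a tableau: `content T v` is the number of cells with entry `v`. -/
noncomputable def content {D : Diagram} (T : SSYT D) : ℕ →₀ ℕ := ∑ c ∈ D, Finsupp.single (T.entry c) 1

/-- `c'` is read before (or equal to) `c` in the reading word:
rows top to bottom, each row right to left. -/
def ReadBefore (c' c : ℕ × ℕ) : Prop := c'.1 < c.1 ∨ (c'.1 = c.1 ∧ c.2 ≤ c'.2)

instance (c' c : ℕ × ℕ) : Decidable (ReadBefore c' c) := by
  unfold ReadBefore; infer_instance

/-- The reading word of `T` is lattice. -/
def IsLattice {D : Diagram} (T : SSYT D) : Prop :=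
  ∀ c ∈ D, ∀ v : ℕ,
    (D.filter (fun c' => ReadBefore c' c ∧ T.entry c' = v + 1)).card ≤
    (D.filter (fun c' => ReadBefore c' c ∧ T.entry c' = v)).card

/-- The skew Schur function of a diagram, as a power series in `x_0, x_1, …`:
the coefficient of the monomial with exponents `d` is the number of SSYT of
shape `D` and content `d`. -/
noncomputable def schurOf (D : Diagram) : MvPowerSeries ℕ ℤ :=
  fun d => (Nat.card {T : SSYT D // content T = d} : ℤ)

/-- Number of lattice SSYT of shape `D` and content `d`. -/
noncomputable def lrCount (D : Diagram) (d : ℕ →₀ ℕ) : ℕ :=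
  Nat.card {T : SSYT D // IsLattice T ∧ content T = d}

/-- Littlewood–Richardson coefficient `c^lam_{mu, d}` (Littlewood–Richardson rule). -/
noncomputable def lrCoeff (lam mu : YoungDiagram) (d : ℕ →₀ ℕ) : ℕ :=
  lrCount (lam.cells \ mu.cells) d

def diagramOfRows (L : List ℕ) : Diagram :=
  (Finset.range L.length).biUnion (fun i => (Finset.range (L.getD i 0)).image (fun j => (i, j)))

/-- The row lengths of the fat staircase `δ_α`. -/
def staircaseRows (α : List ℕ) : List ℕ :=
  ((List.range α.length).reverse.map (fun i => List.replicate (α.getD i 0) (i + 1))).flatten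

/-- The fat staircase `δ_α = (n^{α_n}, …, 1^{α_1})` for `α = (α_1, …, α_n)`. -/
def fatStaircase (α : List ℕ) : Diagram := diagramOfRows (staircaseRows α)

/-- 180 degree rotation of a diagram. -/
def rotD (D : Diagram) : Diagram :=
  D.image (fun c => (ht D - 1 - c.1, wd D - 1 - c.2))

/-- The sequence of row lengths of a diagram, as a finitely supported function. -/
noncomputable def rowContent (D : Diagram) : ℕ →₀ ℕ := ∑ c ∈ D, Finsupp.single c.1 1

/-- A content (partition) `d` is a fat staircase. -/
def IsFatStaircase (d : ℕ →₀ ℕ) : Prop :=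
  ∃ α : List ℕ, (∀ a ∈ α, 0 < a) ∧ d = rowContent (fatStaircase α)

/-- Every Schur function appearing in the expansion of `s_D` is indexed by a fat staircase. -/
def IsSumOfFatStaircases (D : Diagram) : Prop :=
  ∀ d, lrCount D d ≠ 0 → IsFatStaircase d

/-- Near-concatenation of depth `i`. -/
def nearConcat (i : ℕ) (D1 D2 : Diagram) : Diagram :=
  D1.image (fun c => (c.1 + (ht D2 - i), c.2)) ∪ D2.image (fun c => (c.1, c.2 + wd D1))

/-- Direct sum of diagrams. -/
def directSum (D1 D2 : Diagram) : Diagram := nearConcat 0 D1 D2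

/-- A single column of `l` boxes. -/
def colD (l : ℕ) : Diagram := (Finset.range l).image (fun i => (i, 0))

/-- A single row of `m` boxes. -/
def rowD (m : ℕ) : Diagram := (Finset.range m).image (fun j => (0, j))

def colLenAt (D : Diagram) (j : ℕ) : ℕ := (D.filter (fun c => c.2 = j)).card
noncomputable def leftCol (D : Diagram) : ℕ := sInf {j | ∃ i, (i, j) ∈ D}
noncomputable def blCol (D : Diagram) : ℕ := sInf {j | (ht D - 1, j) ∈ D}
noncomputable def topRow (D : Diagram) : ℕ := sInf {i | ∃ j, (i, j) ∈ D}
noncomputable def tlCol (D : Diagram) : ℕ := sInf {j | (topRow D, j) ∈ D}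
def lastRowLen (D : Diagram) : ℕ := (D.filter (fun c => c.1 = ht D - 1)).card

/-- `S(F, E; k)`: the foundation `F` is placed immediately below `E`, with the
first row of `F` beginning one box below and `k` boxes left of the bottom-left
box of `E`. -/
noncomputable def SDiagG (F E : Diagram) (k : ℕ) : Diagram :=
  E.image (fun c => (c.1, c.2 + tlCol F + k)) ∪
  F.image (fun c => (c.1 + ht E, c.2 + blCol E))

/-- `S(λ, μ, E; k)` with foundation the skew diagram `λ/μ`. -/
noncomputable def SDiag (lam mu : YoungDiagram) (E : Diagram) (k : ℕ) : Diagram :=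
  SDiagG (lam.cells \ mu.cells) E k

/-- The set `R_{α,k}` (values as in the paper, i.e. 1-based). -/
def Rset (α : List ℕ) (k : ℕ) : Set ℕ :=
  {v | ∃ j, 1 ≤ j ∧ j ≤ α.length ∧ v = 1 + (α.drop (α.length - j)).sum} ∪
  {v | v = 1 ∧ 0 < k}

def rectD (a b : ℕ) : Diagram := Finset.range a ×ˢ Finset.range b

/-- The complement `D^c` of `D` in the `a × b` rectangle: the 180 degree rotation
of the set-theoretic complement of `D` in the rectangle. -/
def complD (a b : ℕ) (D : Diagram) : Diagram :=
  (rectD a b \ D).image (fun c => (a - 1 - c.1, b - 1 - c.2))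

def IsSkewDiagram (D : Diagram) : Prop :=
  ∃ lam mu : YoungDiagram, mu ≤ lam ∧ D = lam.cells \ mu.cells

def diagramOfF (d : ℕ →₀ ℕ) : Diagram :=
  d.support.biUnion (fun i => (Finset.range (d i)).image (fun j => (i, j)))

/-- A symmetric function is Schur-positive when it is a nonnegative integer
combination of Schur functions of partitions. -/
def SchurPositive (f : MvPowerSeries ℕ ℤ) : Prop :=
  ∃ (S : Finset (ℕ →₀ ℕ)) (a : (ℕ →₀ ℕ) → ℕ),
    (∀ d ∈ S, ∀ i, d (i + 1) ≤ d i) ∧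
    f = ∑ d ∈ S, (a d : ℤ) • schurOf (diagramOfF d)

def AdjCell (c c' : ℕ × ℕ) : Prop :=
  (c.1 = c'.1 ∧ (c.2 + 1 = c'.2 ∨ c'.2 + 1 = c.2)) ∨
  (c.2 = c'.2 ∧ (c.1 + 1 = c'.1 ∨ c'.1 + 1 = c.1))

def ConnectedDiagram (D : Diagram) : Prop :=
  ∀ c ∈ D, ∀ c' ∈ D, Relation.ReflTransGen (fun a b => a ∈ D ∧ b ∈ D ∧ AdjCell a b) c c'

namespace LRProof

open Classical

/-! ### Monotonicity of tableaux on convex diagrams -/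

/-- Convexity of a diagram for the product order on cells; skew diagrams have this property. -/
def OC (D : Diagram) : Prop :=
  ∀ a ∈ D, ∀ b ∈ D, ∀ x : ℕ × ℕ, a.1 ≤ x.1 → x.1 ≤ b.1 → a.2 ≤ x.2 → x.2 ≤ b.2 → x ∈ D

theorem SSYT.ext' {D : Diagram} {S T : SSYT D} (h : ∀ c, S.entry c = T.entry c) : S = T := by
  cases S; cases T
  congr
  funext c
  exact h c

theorem mono_col {D : Diagram} (hD : OC D) (T : SSYT D) {r c : ℕ} (i : ℕ)
    (h1 : (r, c) ∈ D) (h2 : (r + i, c) ∈ D) : T.entry (r, c) + i ≤ T.entry (r + i, c) := by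
  induction i with
  | zero => simp
  | succ i ih =>
    have h3 : (r + i, c) ∈ D := hD _ h1 _ h2 _ (by simp) (by simp) le_rfl le_rfl
    have := ih h3
    have := T.colStrict (r + i) c h3 h2
    have e : r + (i + 1) = r + i + 1 := rfl
    rw [e]
    omega

theorem mono_row {D : Diagram} (hD : OC D) (T : SSYT D) {r c : ℕ} (i : ℕ)
    (h1 : (r, c) ∈ D) (h2 : (r, c + i) ∈ D) : T.entry (r, c) ≤ T.entry (r, c + i) := by
  induction i with
  | zero => simp
  | succ i ih =>
    have h3 : (r, c + i) ∈ D := hD _ h1 _ h2 _ le_rfl le_rfl (by simp) (by simp)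
    exact (ih h3).trans (T.rowWeak r (c + i) h3 h2)

/-- In a convex diagram entries increase weakly to the right, and by at least one for every
step down. -/
theorem mono {D : Diagram} (hD : OC D) (T : SSYT D) {r c r' c' : ℕ}
    (h1 : (r, c) ∈ D) (h2 : (r', c') ∈ D) (hr : r ≤ r') (hc : c ≤ c') :
    T.entry (r, c) + (r' - r) ≤ T.entry (r', c') := by
  obtain ⟨i, rfl⟩ := Nat.exists_eq_add_of_le hr
  obtain ⟨l, rfl⟩ := Nat.exists_eq_add_of_le hc
  have h3 : (r + i, c) ∈ D := hD _ h1 _ h2 _ (by simp) (by simp) (by simp) (by simp)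
  have a := mono_col hD T i h1 h3
  have b := mono_row hD T l h3 h2
  omega

/-! ### Bender–Knuth involutions on a set of initial columns -/

/-- A cell in a column left of `j` is free (for the values `k`, `k + 1`) when it is the only cell
of its column whose entry is `k` or `k + 1`. -/
def Free (D : Diagram) (f : ℕ × ℕ → ℕ) (j k : ℕ) (x : ℕ × ℕ) : Prop :=
  x ∈ D ∧ x.2 < j ∧ (f x = k ∨ f x = k + 1) ∧
    ∀ y ∈ D, y.2 = x.2 → y ≠ x → f y ≠ k ∧ f y ≠ k + 1

/-- The columns of the free cells in row `r`. -/
noncomputable def freeCols (D : Diagram) (f : ℕ × ℕ → ℕ) (j k r : ℕ) : Finset ℕ :=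
  (D.filter (fun x => x.1 = r ∧ Free D f j k x)).image Prod.snd

theorem mem_freeCols {D : Diagram} {f : ℕ × ℕ → ℕ} {j k r c : ℕ} :
    c ∈ freeCols D f j k r ↔ Free D f j k (r, c) := by
  simp only [freeCols, Finset.mem_image, Finset.mem_filter, Prod.exists]
  constructor
  · rintro ⟨a, b, ⟨_, rfl, h⟩, rfl⟩
    exact h
  · intro h
    exact ⟨r, c, ⟨h.1, rfl, h⟩, rfl⟩

/-- Reflection of the interval spanned by `A`. -/
noncomputable def mir (A : Finset ℕ) (c : ℕ) : ℕ := sInf (A : Set ℕ) + A.sup id - c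

theorem mir_bounds {A : Finset ℕ} {c : ℕ} (hc : c ∈ A) :
    sInf (A : Set ℕ) ≤ c ∧ c ≤ A.sup id :=
  ⟨Nat.sInf_le (by simpa using hc), Finset.le_sup (f := id) hc⟩

theorem mir_mem {A : Finset ℕ} (hA : ∀ a ∈ A, ∀ b ∈ A, ∀ x, a ≤ x → x ≤ b → x ∈ A)
    {c : ℕ} (hc : c ∈ A) : mir A c ∈ A := by
  have hb := mir_bounds hc
  have h1 : sInf (A : Set ℕ) ∈ A := by
    have := Nat.sInf_mem (s := (A : Set ℕ)) ⟨c, by simpa using hc⟩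
    simpa using this
  have h2 : A.sup id ∈ A := by
    obtain ⟨b, hb, e⟩ := Finset.exists_mem_eq_sup A ⟨c, hc⟩ id
    rw [e]; exact hb
  exact hA _ h1 _ h2 _ (by unfold mir; omega) (by unfold mir; omega)

theorem mir_mir {A : Finset ℕ} {c : ℕ} (hc : c ∈ A) : mir A (mir A c) = c := by
  have hb := mir_bounds hc
  unfold mir
  omega

/-- The Bender–Knuth move: in every row the word of `k`s and `k + 1`s on the free cells is
reversed and its two letters are exchanged. -/
noncomputable def bkE (D : Diagram) (f : ℕ × ℕ → ℕ) (j k : ℕ) (x : ℕ × ℕ) : ℕ :=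
  if Free D f j k x then
    (if f (x.1, mir (freeCols D f j k x.1) x.2) = k then k + 1 else k)
  else f x

/-- The free cells of a row are consecutive: a second `k` or `k + 1` in a column between two free
cells would, by monotonicity, force one in the column of a free cell. -/
theorem freeCols_conn {D : Diagram} (hD : OC D) (T : SSYT D) (j k r : ℕ) :
    ∀ a ∈ freeCols D T.entry j k r, ∀ b ∈ freeCols D T.entry j k r, ∀ x, a ≤ x → x ≤ b →
      x ∈ freeCols D T.entry j k r := by
  intro a ha b hb x hax hxb
  rw [mem_freeCols] at *
  obtain ⟨ha1, ha2, ha3, ha4⟩ := ha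
  obtain ⟨hb1, hb2, hb3, hb4⟩ := hb
  simp only at ha2 hb2
  have hx : (r, x) ∈ D := hD _ ha1 _ hb1 _ le_rfl le_rfl hax hxb
  have m1 := mono hD T ha1 hx le_rfl hax
  have m2 := mono hD T hx hb1 le_rfl hxb
  refine ⟨hx, by simp only; omega, by omega, ?_⟩
  rintro ⟨r', x'⟩ hy hyx hne
  simp only at hyx
  subst hyx
  have hrr : r' ≠ r := by rintro rfl; exact hne rfl
  by_contra hcon
  rcases lt_or_gt_of_ne hrr with h | h
  · -- an entry `k` above forces an entry `k` above the free cell in column `b`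
    have m3 := mono hD T hy hx h.le le_rfl
    have hz : (r', b) ∈ D := hD _ hy _ hb1 _ le_rfl h.le hxb le_rfl
    have m4 := mono hD T hz hb1 h.le le_rfl
    have m5 := mono hD T hy hz le_rfl hxb
    have := hb4 _ hz rfl (by simp; omega)
    omega
  · have m3 := mono hD T hx hy h.le le_rfl
    have hz : (r', a) ∈ D := hD _ ha1 _ hy _ h.le le_rfl le_rfl hax
    have m4 := mono hD T ha1 hz h.le le_rfl
    have m5 := mono hD T hz hy le_rfl hax
    have := ha4 _ hz rfl (by simp; omega)
    omega

theorem free_mir {D : Diagram} (hD : OC D) (T : SSYT D) {j k r c : ℕ}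
    (h : Free D T.entry j k (r, c)) :
    Free D T.entry j k (r, mir (freeCols D T.entry j k r) c) :=
  mem_freeCols.1 (mir_mem (freeCols_conn hD T j k r) (mem_freeCols.2 h))

theorem bkE_pair (D : Diagram) (f : ℕ × ℕ → ℕ) (j k : ℕ) (x : ℕ × ℕ) :
    (bkE D f j k x = k ∨ bkE D f j k x = k + 1) ↔ (f x = k ∨ f x = k + 1) := by
  unfold bkE
  split_ifs with h1 h2
  · have := h1.2.2.1; simp [this]
  · have := h1.2.2.1; simp [this]
  · rfl

theorem free_bkE (D : Diagram) (f : ℕ × ℕ → ℕ) (j k : ℕ) (x : ℕ × ℕ) :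
    Free D (bkE D f j k) j k x ↔ Free D f j k x := by
  have key : ∀ y, (bkE D f j k y ≠ k ∧ bkE D f j k y ≠ k + 1) ↔ (f y ≠ k ∧ f y ≠ k + 1) := by
    intro y
    have := bkE_pair D f j k y
    tauto
  unfold Free
  rw [bkE_pair]
  simp only [key]

theorem freeCols_bkE (D : Diagram) (f : ℕ × ℕ → ℕ) (j k r : ℕ) :
    freeCols D (bkE D f j k) j k r = freeCols D f j k r := by
  ext c
  rw [mem_freeCols, mem_freeCols, free_bkE]

/-- The Bender–Knuth move is an involution, because it does not change which cells are free. -/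
theorem bkE_bkE {D : Diagram} (hD : OC D) (T : SSYT D) (j k : ℕ) (x : ℕ × ℕ) :
    bkE D (bkE D T.entry j k) j k x = T.entry x := by
  obtain ⟨r, c⟩ := x
  by_cases h : Free D T.entry j k (r, c)
  · have h' := free_mir hD T h
    rw [bkE, if_pos ((free_bkE _ _ _ _ _).2 h), freeCols_bkE]
    simp only
    rw [bkE, if_pos h']
    simp only
    rw [mir_mir (mem_freeCols.2 h)]
    have := h.2.2.1
    split_ifs with h1 h2 <;> omega
  · rw [bkE, if_neg (by rwa [free_bkE]), bkE, if_neg h]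

/-- The tableau obtained by the Bender–Knuth move on the columns left of `j`. It is semistandard
across the boundary because column `j` contains no `k`. -/
noncomputable def bk {D : Diagram} (hD : OC D) (T : SSYT D) (j k : ℕ)
    (hj : ∀ r, (r, j) ∈ D → T.entry (r, j) ≠ k) : SSYT D where
  entry := bkE D T.entry j k
  zero_outside c hc := by
    rw [bkE, if_neg (fun h => hc h.1), T.zero_outside c hc]
  rowWeak r c h1 h2 := by
    have hT := T.rowWeak r c h1 h2
    by_cases f1 : Free D T.entry j k (r, c) <;> by_cases f2 : Free D T.entry j k (r, c + 1)
    · have g1 := free_mir hD T f1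
      have g2 := free_mir hD T f2
      have b1 := mir_bounds (mem_freeCols.2 f1)
      have b2 := mir_bounds (mem_freeCols.2 f2)
      rw [bkE, if_pos f1, bkE, if_pos f2]
      simp only
      have hm := mono hD T g2.1 g1.1 le_rfl (by unfold mir; omega)
      have := g1.2.2.1
      have := g2.2.2.1
      split_ifs <;> omega
    · rw [bkE, if_pos f1, bkE, if_neg f2]
      have e1 := f1.2.2.1
      have : k + 1 ≤ T.entry (r, c + 1) := by
        by_contra hcon
        have e2 : T.entry (r, c + 1) = k := by omega
        have hcj : c + 1 < j := by
          have : c < j := f1.2.1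
          by_contra hh
          have : c + 1 = j := by omega
          exact hj r (this ▸ h2) (this ▸ e2)
        apply f2
        refine ⟨h2, hcj, by omega, ?_⟩
        rintro ⟨r', c'⟩ hy hyx hne
        simp only at hyx
        subst hyx
        have hrr : r' ≠ r := by rintro rfl; exact hne rfl
        rcases lt_or_gt_of_ne hrr with h | h
        · have := mono hD T hy h2 h.le le_rfl
          omega
        · have m3 := mono hD T h2 hy h.le le_rfl
          have hz : (r', c) ∈ D := hD _ h1 _ hy _ h.le le_rfl le_rfl (by simp)
          have m4 := mono hD T h1 hz h.le le_rfl
          have m5 := mono hD T hz hy le_rfl (Nat.le_succ _)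
          have := f1.2.2.2 _ hz rfl (by simp; omega)
          omega
      split_ifs <;> omega
    · rw [bkE, if_neg f1, bkE, if_pos f2]
      have e2 := f2.2.2.1
      have : T.entry (r, c) ≤ k := by
        by_contra hcon
        have e1 : T.entry (r, c) = k + 1 := by omega
        have hcj : c < j := by
          have : c + 1 < j := f2.2.1
          omega
        apply f1
        refine ⟨h1, hcj, by omega, ?_⟩
        rintro ⟨r', c'⟩ hy hyx hne
        simp only at hyx
        subst hyx
        have hrr : r' ≠ r := by rintro rfl; exact hne rfl
        rcases lt_or_gt_of_ne hrr with h | h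
        · have m3 := mono hD T hy h1 h.le le_rfl
          have hz : (r', c' + 1) ∈ D := hD _ hy _ h2 _ le_rfl h.le (by simp) le_rfl
          have m4 := mono hD T hz h2 h.le le_rfl
          have m5 := mono hD T hy hz le_rfl (Nat.le_succ _)
          have := f2.2.2.2 _ hz rfl (by simp; omega)
          omega
        · have := mono hD T h1 hy h.le le_rfl
          omega
      split_ifs <;> omega
    · rw [bkE, if_neg f1, bkE, if_neg f2]
      exact hT
  colStrict r c h1 h2 := by
    have hT := T.colStrict r c h1 h2
    have key1 : Free D T.entry j k (r, c) → k + 2 ≤ T.entry (r + 1, c) := by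
      intro f1
      have := f1.2.2.1
      have := f1.2.2.2 _ h2 rfl (by simp)
      omega
    have key2 : Free D T.entry j k (r + 1, c) → T.entry (r, c) < k := by
      intro f1
      have := f1.2.2.1
      have := f1.2.2.2 _ h1 rfl (by simp)
      omega
    by_cases f1 : Free D T.entry j k (r, c) <;> by_cases f2 : Free D T.entry j k (r + 1, c)
    · have := key1 f1
      have := f2.2.2.1
      omega
    · have := key1 f1
      rw [bkE, if_pos f1, bkE, if_neg f2]
      split_ifs <;> omega
    · have := key2 f2
      rw [bkE, if_neg f1, bkE, if_pos f2]
      split_ifs <;> omega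
    · rw [bkE, if_neg f1, bkE, if_neg f2]
      exact hT

/-- The number of cells in columns left of `j` with entry `v`. -/
noncomputable def cntLt (D : Diagram) (f : ℕ × ℕ → ℕ) (j v : ℕ) : ℕ :=
  (D.filter (fun x => x.2 < j ∧ f x = v)).card

/-- The number of cells in columns `≥ j` with entry `v`. -/
noncomputable def cntGe (D : Diagram) (f : ℕ × ℕ → ℕ) (j v : ℕ) : ℕ :=
  (D.filter (fun x => j ≤ x.2 ∧ f x = v)).card

/-- The number of cells with entry `v`. -/
noncomputable def cnt (D : Diagram) (f : ℕ × ℕ → ℕ) (v : ℕ) : ℕ :=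
  (D.filter (fun x => f x = v)).card

theorem cnt_eq (D : Diagram) (f : ℕ × ℕ → ℕ) (j v : ℕ) :
    cnt D f v = cntLt D f j v + cntGe D f j v := by
  unfold cnt cntLt cntGe
  rw [← Finset.card_union_of_disjoint]
  · congr 1
    ext x
    simp only [Finset.mem_union, Finset.mem_filter]
    have := lt_or_ge x.2 j
    tauto
  · rw [Finset.disjoint_left]
    intro x h1 h2
    simp only [Finset.mem_filter] at h1 h2
    omega

theorem cntGe_zero (D : Diagram) (f : ℕ × ℕ → ℕ) (v : ℕ) : cntGe D f 0 v = cnt D f v := by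
  simp [cnt, cntGe]

theorem cntGe_bkE (D : Diagram) (f : ℕ × ℕ → ℕ) {j j' : ℕ} (h : j ≤ j') (k v : ℕ) :
    cntGe D (bkE D f j k) j' v = cntGe D f j' v := by
  unfold cntGe
  congr 1
  apply Finset.filter_congr
  intro x _
  apply and_congr_right
  intro hx
  rw [bkE, if_neg]
  intro hf
  have := hf.2.1
  omega

theorem cntLt_bkE_of_ne (D : Diagram) (f : ℕ × ℕ → ℕ) {j k v : ℕ} (h1 : v ≠ k) (h2 : v ≠ k + 1) :
    cntLt D (bkE D f j k) j v = cntLt D f j v := by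
  unfold cntLt
  congr 1
  apply Finset.filter_congr
  intro x _
  apply and_congr_right
  intro hx
  by_cases hf : Free D f j k x
  · have := hf.2.2.1
    have := (bkE_pair D f j k x).2 this
    omega
  · rw [bkE, if_neg hf]

theorem cntLt_split (D : Diagram) (f : ℕ × ℕ → ℕ) (P : ℕ × ℕ → Prop) (j v : ℕ) :
    cntLt D f j v = (D.filter (fun x => (x.2 < j ∧ f x = v) ∧ P x)).card +
      (D.filter (fun x => (x.2 < j ∧ f x = v) ∧ ¬ P x)).card := by
  unfold cntLt
  rw [← Finset.card_union_of_disjoint]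
  · congr 1
    ext x
    simp only [Finset.mem_union, Finset.mem_filter]
    tauto
  · rw [Finset.disjoint_left]
    intro x h1 h2
    simp only [Finset.mem_filter] at h1 h2
    tauto

/-- Cells with entry `k` that are not free come in pairs with the non-free cells with entry
`k + 1` directly below them. -/
theorem card_locked {D : Diagram} (hD : OC D) (T : SSYT D) (j k : ℕ) :
    (D.filter (fun x => (x.2 < j ∧ T.entry x = k) ∧ ¬ Free D T.entry j k x)).card =
    (D.filter (fun x => (x.2 < j ∧ T.entry x = k + 1) ∧ ¬ Free D T.entry j k x)).card := by
  apply Finset.card_nbij' (fun x => (x.1 + 1, x.2)) (fun x => (x.1 - 1, x.2))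
  · rintro ⟨r, c⟩ hx
    simp only [Finset.coe_filter, Set.mem_ofPred_eq] at hx ⊢
    obtain ⟨h1, ⟨h2, h3⟩, h4⟩ := hx
    have : ∃ y ∈ D, y.2 = c ∧ y ≠ (r, c) ∧ ¬ (T.entry y ≠ k ∧ T.entry y ≠ k + 1) := by
      by_contra hcon
      push Not at hcon
      exact h4 ⟨h1, h2, Or.inl h3, hcon⟩
    obtain ⟨⟨r', c'⟩, hy, hyc, hne, hv⟩ := this
    simp only at hyc
    subst hyc
    have hrr : r' ≠ r := by rintro rfl; exact hne rfl
    rcases lt_or_gt_of_ne hrr with h | h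
    · have := mono hD T hy h1 h.le le_rfl
      omega
    · have := mono hD T h1 hy h.le le_rfl
      obtain rfl : r' = r + 1 := by omega
      refine ⟨hy, ⟨h2, by omega⟩, fun hf => ?_⟩
      exact (hf.2.2.2 _ h1 rfl (by simp)).1 h3
  · rintro ⟨r, c⟩ hx
    simp only [Finset.coe_filter, Set.mem_ofPred_eq] at hx ⊢
    obtain ⟨h1, ⟨h2, h3⟩, h4⟩ := hx
    have : ∃ y ∈ D, y.2 = c ∧ y ≠ (r, c) ∧ ¬ (T.entry y ≠ k ∧ T.entry y ≠ k + 1) := by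
      by_contra hcon
      push Not at hcon
      exact h4 ⟨h1, h2, Or.inr h3, hcon⟩
    obtain ⟨⟨r', c'⟩, hy, hyc, hne, hv⟩ := this
    simp only at hyc
    subst hyc
    have hrr : r' ≠ r := by rintro rfl; exact hne rfl
    rcases lt_or_gt_of_ne hrr with h | h
    · have := mono hD T hy h1 h.le le_rfl
      obtain rfl : r = r' + 1 := by omega
      refine ⟨hy, ⟨h2, by simp only [Nat.add_sub_cancel]; omega⟩, fun hf => ?_⟩
      exact (hf.2.2.2 _ h1 rfl (by simp)).2 h3
    · have := mono hD T h1 hy h.le le_rfl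
      omega
  · rintro ⟨r, c⟩ hx
    simp
  · rintro ⟨r, c⟩ hx
    simp only [Finset.coe_filter, Set.mem_ofPred_eq] at hx
    obtain ⟨h1, ⟨h2, h3⟩, h4⟩ := hx
    have : r ≠ 0 := by
      rintro rfl
      apply h4
      refine ⟨h1, h2, Or.inr h3, ?_⟩
      rintro ⟨r', c'⟩ hy hyc hne
      simp only at hyc
      subst hyc
      have hrr : r' ≠ 0 := by rintro rfl; exact hne rfl
      have := mono hD T h1 hy (Nat.zero_le _) le_rfl
      omega
    simp only [Prod.mk.injEq, and_true]
    omega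

/-- The Bender–Knuth move exchanges the multiplicities of `k` and `k + 1` left of column `j`; this
is the half for the new multiplicity of `k`. -/
theorem cntLt_bkE_left {D : Diagram} (hD : OC D) (T : SSYT D) (j k : ℕ) :
    cntLt D (bkE D T.entry j k) j k = cntLt D T.entry j (k + 1) := by
  rw [cntLt_split D _ (Free D T.entry j k) j k, cntLt_split D _ (Free D T.entry j k) j (k + 1)]
  congr 1
  · apply Finset.card_nbij' (fun x => (x.1, mir (freeCols D T.entry j k x.1) x.2))
      (fun x => (x.1, mir (freeCols D T.entry j k x.1) x.2))
    · rintro ⟨r, c⟩ hx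
      simp only [Finset.coe_filter, Set.mem_ofPred_eq] at hx ⊢
      obtain ⟨h1, ⟨h2, h3⟩, h4⟩ := hx
      have h5 := free_mir hD T h4
      refine ⟨h5.1, ⟨h5.2.1, ?_⟩, h5⟩
      rw [bkE, if_pos h4] at h3
      have := h5.2.2.1
      simp only at h3
      split_ifs at h3 <;> omega
    · rintro ⟨r, c⟩ hx
      simp only [Finset.coe_filter, Set.mem_ofPred_eq] at hx ⊢
      obtain ⟨h1, ⟨h2, h3⟩, h4⟩ := hx
      have h5 := free_mir hD T h4
      refine ⟨h5.1, ⟨h5.2.1, ?_⟩, h5⟩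
      rw [bkE, if_pos h5]
      simp only
      rw [mir_mir (mem_freeCols.2 h4), h3]
      simp
    all_goals
      rintro ⟨r, c⟩ hx
      simp only [Finset.coe_filter, Set.mem_ofPred_eq] at hx
      simp only
      rw [mir_mir (mem_freeCols.2 hx.2.2)]
  · rw [← card_locked hD T j k]
    congr 1
    apply Finset.filter_congr
    intro x _
    apply and_congr_left
    intro h
    rw [bkE, if_neg h]

/-- The other half of `cntLt_bkE_left`, obtained from it because the move is an involution. -/
theorem cntLt_bkE_right {D : Diagram} (hD : OC D) (T : SSYT D) (j k : ℕ)
    (hj : ∀ r, (r, j) ∈ D → T.entry (r, j) ≠ k) :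
    cntLt D (bkE D T.entry j k) j (k + 1) = cntLt D T.entry j k := by
  have h := cntLt_bkE_left hD (bk hD T j k hj) j k
  rw [← show bkE D T.entry j k = (bk hD T j k hj).entry from rfl] at h
  rw [← h]
  congr 1
  funext x
  exact bkE_bkE hD T j k x

/-! ### Schur polynomials in finitely many variables -/

theorem finite_tabs (D : Diagram) (m : ℕ) :
    {T : SSYT D | ∀ c ∈ D, T.entry c < m}.Finite := by
  apply Set.Finite.of_injOn (f := fun (T : SSYT D) (c : D) => T.entry c)
    (t := Set.pi Set.univ (fun _ => Set.Iio m))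
  · intro T hT c _
    exact hT c c.2
  · intro S _ T _ h
    apply SSYT.ext'
    intro c
    by_cases hc : c ∈ D
    · exact congrFun h ⟨c, hc⟩
    · rw [S.zero_outside c hc, T.zero_outside c hc]
  · exact Set.Finite.pi (fun _ => Set.finite_Iio m)

/-- The semistandard tableaux of shape `D` with all entries below `m`. -/
noncomputable def tabs (D : Diagram) (m : ℕ) : Finset (SSYT D) := (finite_tabs D m).toFinset

theorem mem_tabs {D : Diagram} {m : ℕ} {T : SSYT D} :
    T ∈ tabs D m ↔ ∀ c ∈ D, T.entry c < m := by
  simp [tabs]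

/-- The skew Schur polynomial of `D` in the variables `X 0, …, X n`. -/
noncomputable def schurPoly (D : Diagram) (n : ℕ) : MvPolynomial (Fin (n + 1)) ℤ :=
  ∑ T ∈ tabs D (n + 1), ∏ i : Fin (n + 1), MvPolynomial.X i ^ cnt D T.entry i

/-- The alternant `det (X i ^ μ j)`. -/
noncomputable def alt (n : ℕ) (μ : Fin (n + 1) → ℕ) : MvPolynomial (Fin (n + 1)) ℤ :=
  (Matrix.of fun i j => MvPolynomial.X i ^ μ j).det

/-- The exponents `(n, n - 1, …, 0)`. -/
def rho (n : ℕ) (i : Fin (n + 1)) : ℕ := n - i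

theorem bk_mem_tabs {D : Diagram} (hD : OC D) {T : SSYT D} {j k m : ℕ}
    (hj : ∀ r, (r, j) ∈ D → T.entry (r, j) ≠ k) (hk : k + 1 < m) (hT : T ∈ tabs D m) :
    bk hD T j k hj ∈ tabs D m := by
  rw [mem_tabs] at *
  intro c hc
  have := hT c hc
  change bkE D T.entry j k c < m
  unfold bkE
  split_ifs <;> omega

theorem lt_wd {D : Diagram} {x : ℕ × ℕ} (h : x ∈ D) : x.2 < wd D :=
  Finset.le_sup (f := fun c : ℕ × ℕ => c.2 + 1) h

theorem cntGe_wd (D : Diagram) (f : ℕ × ℕ → ℕ) (v : ℕ) : cntGe D f (wd D) v = 0 := by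
  unfold cntGe
  rw [Finset.card_eq_zero, Finset.filter_eq_empty_iff]
  intro x hx h
  have := lt_wd hx
  omega

/-- The exponents of a tableau after a Bender–Knuth move, when column `j` does not interfere. -/
theorem cnt_bk {D : Diagram} (hD : OC D) (T : SSYT D) (j k : ℕ)
    (hj : ∀ r, (r, j) ∈ D → T.entry (r, j) ≠ k) :
    cnt D (bk hD T j k hj).entry k = cntLt D T.entry j (k + 1) + cntGe D T.entry j k ∧
    cnt D (bk hD T j k hj).entry (k + 1) = cntLt D T.entry j k + cntGe D T.entry j (k + 1) ∧
    ∀ v, v ≠ k → v ≠ k + 1 → cnt D (bk hD T j k hj).entry v = cnt D T.entry v := by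
  change cnt D (bkE D T.entry j k) k = _ ∧ cnt D (bkE D T.entry j k) (k + 1) = _ ∧
    ∀ v, v ≠ k → v ≠ k + 1 → cnt D (bkE D T.entry j k) v = _
  refine ⟨?_, ?_, fun v h1 h2 => ?_⟩
  · rw [cnt_eq D _ j, cntLt_bkE_left hD, cntGe_bkE _ _ le_rfl]
  · rw [cnt_eq D _ j, cntLt_bkE_right hD T j k hj, cntGe_bkE _ _ le_rfl]
  · rw [cnt_eq D _ j, cntLt_bkE_of_ne _ _ h1 h2, cntGe_bkE _ _ le_rfl, ← cnt_eq]

theorem bk_bk {D : Diagram} (hD : OC D) (T : SSYT D) (j k : ℕ)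
    (hj : ∀ r, (r, j) ∈ D → T.entry (r, j) ≠ k)
    (hj' : ∀ r, (r, j) ∈ D → (bk hD T j k hj).entry (r, j) ≠ k) :
    bk hD (bk hD T j k hj) j k hj' = T :=
  SSYT.ext' (bkE_bkE hD T j k)

theorem swap_cases {n : ℕ} (i : Fin n) (v : Fin (n + 1)) :
    (v = i.castSucc ∧ Equiv.swap i.castSucc i.succ v = i.succ) ∨
    (v = i.succ ∧ Equiv.swap i.castSucc i.succ v = i.castSucc) ∨
    ((v : ℕ) ≠ i ∧ (v : ℕ) ≠ i + 1 ∧ Equiv.swap i.castSucc i.succ v = v) := by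
  by_cases h1 : v = i.castSucc
  · left; subst h1; simp
  · by_cases h2 : v = i.succ
    · right; left; subst h2; simp
    · right; right
      refine ⟨fun h => h1 (Fin.ext h), fun h => h2 (Fin.ext (by simpa using h)), ?_⟩
      exact Equiv.swap_apply_of_ne_of_ne h1 h2

/-- The Bender–Knuth move on all columns (`j = wd D`) shows the symmetry of a skew Schur polynomial
in adjacent variables. -/
theorem rename_swap_schurPoly {D : Diagram} (hD : OC D) (n : ℕ) (i : Fin n) :
    MvPolynomial.rename (Equiv.swap i.castSucc i.succ) (schurPoly D n) = schurPoly D n := by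
  have hj : ∀ (T : SSYT D) r, (r, wd D) ∈ D → T.entry (r, wd D) ≠ (i : ℕ) :=
    fun T r h => absurd (lt_wd h) (lt_irrefl _)
  unfold schurPoly
  rw [map_sum]
  refine Finset.sum_nbij' (fun T => bk hD T (wd D) i (hj T)) (fun T => bk hD T (wd D) i (hj T))
    ?_ ?_ ?_ ?_ ?_
  · intro T hT
    exact bk_mem_tabs hD _ (by omega) hT
  · intro T hT
    exact bk_mem_tabs hD _ (by omega) hT
  · intro T _
    exact bk_bk hD _ _ _ _ _
  · intro T _
    exact bk_bk hD _ _ _ _ _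
  · intro T _
    rw [map_prod]
    simp only [map_pow, MvPolynomial.rename_X]
    refine Fintype.prod_equiv (Equiv.swap i.castSucc i.succ) _ _ ?_
    intro v
    congr 1
    obtain ⟨h1, h2, h3⟩ := cnt_bk hD T (wd D) i (hj T)
    rw [cntGe_wd] at h1 h2
    have e := fun v => cnt_eq D T.entry (wd D) v
    simp only [cntGe_wd] at e
    rcases swap_cases i v with ⟨rfl, h⟩ | ⟨rfl, h⟩ | ⟨hv1, hv2, h⟩
    · rw [h, Fin.val_succ, h2, e]; rfl
    · rw [h, Fin.val_castSucc, h1, e]; rfl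
    · rw [h, h3 _ hv1 hv2]

theorem rename_schurPoly {D : Diagram} (hD : OC D) (n : ℕ) (σ : Equiv.Perm (Fin (n + 1))) :
    MvPolynomial.rename σ (schurPoly D n) = schurPoly D n := by
  have hσ : σ ∈ Submonoid.closure
      (Set.range fun i : Fin n => Equiv.swap i.castSucc i.succ) := by
    rw [Equiv.Perm.mclosure_swap_castSucc_succ]; trivial
  induction hσ using Submonoid.closure_induction with
  | mem x hx =>
    obtain ⟨i, rfl⟩ := hx
    exact rename_swap_schurPoly hD n i
  | one => exact MvPolynomial.rename_id_apply _
  | mul x y _ _ hx hy =>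
    rw [Equiv.Perm.coe_mul, ← MvPolynomial.rename_rename, hy, hx]

theorem alt_apply (n : ℕ) (μ : Fin (n + 1) → ℕ) :
    alt n μ = ∑ σ : Equiv.Perm (Fin (n + 1)),
      Equiv.Perm.sign σ • ∏ i, MvPolynomial.X (σ i) ^ μ i := by
  rw [alt, Matrix.det_apply]
  rfl

/-- By symmetry of the Schur polynomial, each term of the alternant may be multiplied with a
permuted copy of it, which turns the product into a sum of alternants over all tableaux. -/
theorem alt_mul_schurPoly {D : Diagram} (hD : OC D) (n : ℕ) :
    alt n (rho n) * schurPoly D n =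
      ∑ T ∈ tabs D (n + 1), alt n (fun i => rho n i + cnt D T.entry i) := by
  simp only [alt_apply]
  rw [Finset.sum_comm, Finset.sum_mul]
  refine Finset.sum_congr rfl fun σ _ => ?_
  rw [← Finset.smul_sum, smul_mul_assoc]
  congr 1
  conv_lhs => rw [← rename_schurPoly hD n σ]
  rw [schurPoly, map_sum, Finset.mul_sum]
  refine Finset.sum_congr rfl fun T _ => ?_
  rw [map_prod, ← Finset.prod_mul_distrib]
  refine Finset.prod_congr rfl fun i _ => ?_
  rw [map_pow, MvPolynomial.rename_X, pow_add]

theorem alt_swap (n : ℕ) (μ μ' : Fin (n + 1) → ℕ) (i : Fin n)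
    (h : ∀ v, μ' v = μ (Equiv.swap i.castSucc i.succ v)) : alt n μ' = - alt n μ := by
  have := Matrix.det_permute' (Equiv.swap i.castSucc i.succ)
    (Matrix.of fun i j => (MvPolynomial.X i : MvPolynomial (Fin (n + 1)) ℤ) ^ μ j)
  rw [Equiv.Perm.sign_swap (by simp [Fin.ext_iff])] at this
  simp only [Units.val_neg, Units.val_one, Int.cast_neg, Int.cast_one, neg_mul, one_mul] at this
  rw [alt, alt, ← this]
  congr 1
  ext a b
  simp [h]

/-- Up to sign, `alt n (rho n)` is the Vandermonde determinant. -/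
theorem alt_rho_ne_zero (n : ℕ) : alt n (rho n) ≠ 0 := by
  have h := Matrix.det_permute' (Fin.revPerm)
    (Matrix.vandermonde (MvPolynomial.X : Fin (n + 1) → MvPolynomial (Fin (n + 1)) ℤ))
  have hv : (Matrix.vandermonde
      (MvPolynomial.X : Fin (n + 1) → MvPolynomial (Fin (n + 1)) ℤ)).det ≠ 0 :=
    Matrix.det_vandermonde_ne_zero_iff.2 (MvPolynomial.X_injective)
  have e : alt n (rho n) = (Matrix.submatrix (Matrix.vandermonde
      (MvPolynomial.X : Fin (n + 1) → MvPolynomial (Fin (n + 1)) ℤ)) id Fin.revPerm).det := by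
    rw [alt]
    congr 1
    ext a b
    simp only [Matrix.of_apply, rho, Matrix.submatrix_apply, Matrix.vandermonde_apply, id,
      Fin.revPerm_apply, Fin.val_rev]
    congr 2
    omega
  rw [e, h]
  apply mul_ne_zero _ hv
  rcases Int.units_eq_one_or (Equiv.Perm.sign (Fin.revPerm : Equiv.Perm (Fin (n + 1)))) with h | h
    <;> simp [h]

/-! ### Good tableaux and the sign-reversing involution -/

/-- A tableau is good when, for every `j`, its restriction to the columns `≥ j` has a weakly
decreasing content. -/
def Good {D : Diagram} (T : SSYT D) : Prop :=
  ∀ j v, cntGe D T.entry j (v + 1) ≤ cntGe D T.entry j v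

/-- `(j, k)` is the place where `T` fails to be good: `j` is the rightmost possible column, and
`k` the smallest possible value for that column. -/
def IsViol {D : Diagram} (T : SSYT D) (j k : ℕ) : Prop :=
  cntGe D T.entry j k < cntGe D T.entry j (k + 1) ∧
  (∀ j' > j, ∀ v, cntGe D T.entry j' (v + 1) ≤ cntGe D T.entry j' v) ∧
  ∀ v < k, cntGe D T.entry j (v + 1) ≤ cntGe D T.entry j v

theorem exists_viol {D : Diagram} {T : SSYT D} (h : ¬ Good T) : ∃ j k, IsViol T j k := by
  let P : ℕ → Prop := fun j => ∃ v, cntGe D T.entry j v < cntGe D T.entry j (v + 1)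
  have hP : ∀ j, P j → j ≤ wd D := by
    rintro j ⟨v, hv⟩
    have : 0 < cntGe D T.entry j (v + 1) := by omega
    obtain ⟨x, hx⟩ := Finset.card_pos.1 this
    rw [Finset.mem_filter] at hx
    have := lt_wd hx.1
    omega
  obtain ⟨j, hj⟩ : ∃ j, P j := by
    unfold Good at h
    push Not at h
    exact h
  have h1 : P (Nat.findGreatest P (wd D)) := Nat.findGreatest_spec (hP j hj) hj
  refine ⟨Nat.findGreatest P (wd D), Nat.find h1, Nat.find_spec h1, ?_, ?_⟩
  · intro j' hj' v
    by_contra hcon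
    have hPj : P j' := ⟨v, by omega⟩
    exact Nat.findGreatest_is_greatest hj' (hP _ hPj) hPj
  · intro v hv
    have := Nat.find_min h1 hv
    omega

theorem IsViol.unique {D : Diagram} {T : SSYT D} {j k j' k' : ℕ} (h : IsViol T j k)
    (h' : IsViol T j' k') : j = j' ∧ k = k' := by
  obtain rfl : j = j' := by
    rcases lt_trichotomy j j' with hlt | heq | hlt
    · have := h.2.1 j' hlt k'
      have := h'.1
      omega
    · exact heq
    · have := h'.2.1 j hlt k
      have := h.1
      omega
  refine ⟨rfl, ?_⟩
  rcases lt_trichotomy k k' with hlt | heq | hlt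
  · have := h'.2.2 k hlt
    have := h.1
    omega
  · exact heq
  · have := h.2.2 k' hlt
    have := h'.1
    omega

theorem cntGe_succ (D : Diagram) (f : ℕ × ℕ → ℕ) (j v : ℕ) :
    cntGe D f j v = (D.filter (fun x => x.2 = j ∧ f x = v)).card + cntGe D f (j + 1) v := by
  unfold cntGe
  rw [← Finset.card_union_of_disjoint]
  · congr 1
    ext x
    simp only [Finset.mem_union, Finset.mem_filter]
    have : j ≤ x.2 ↔ x.2 = j ∨ j + 1 ≤ x.2 := by omega
    tauto
  · rw [Finset.disjoint_left]
    intro x h1 h2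
    simp only [Finset.mem_filter] at h1 h2
    omega

theorem col_inj {D : Diagram} (hD : OC D) (T : SSYT D) {r r' c : ℕ} (h : (r, c) ∈ D)
    (h' : (r', c) ∈ D) (e : T.entry (r, c) = T.entry (r', c)) : r = r' := by
  rcases le_total r r' with hl | hl
  · have := mono hD T h h' hl le_rfl
    omega
  · have := mono hD T h' h hl le_rfl
    omega

theorem colCnt_le_one {D : Diagram} (hD : OC D) (T : SSYT D) (j v : ℕ) :
    (D.filter (fun x => x.2 = j ∧ T.entry x = v)).card ≤ 1 := by
  rw [Finset.card_le_one]
  rintro ⟨r, c⟩ ha ⟨r', c'⟩ hb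
  simp only [Finset.mem_filter] at ha hb
  obtain ⟨ha1, rfl, ha2⟩ := ha
  obtain ⟨hb1, rfl, hb2⟩ := hb
  rw [col_inj hD T ha1 hb1 (by omega)]

theorem colCnt_pos {D : Diagram} {f : ℕ × ℕ → ℕ} {r c v : ℕ} (h : (r, c) ∈ D)
    (e : f (r, c) = v) : 0 < (D.filter (fun x => x.2 = c ∧ f x = v)).card :=
  Finset.card_pos.2 ⟨(r, c), by simp [h, e]⟩

theorem colCnt_zero {D : Diagram} {f : ℕ × ℕ → ℕ} {c v : ℕ} (h : ∀ r, (r, c) ∈ D → f (r, c) ≠ v) :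
    (D.filter (fun x => x.2 = c ∧ f x = v)).card = 0 := by
  rw [Finset.card_eq_zero, Finset.filter_eq_empty_iff]
  rintro ⟨r, c'⟩ hx ⟨rfl, h2⟩
  exact h r hx h2

/-- Goodness to the right of column `j` means that a violation in column `j` is caused by that
column alone: it contains `k + 1` but not `k`. -/
theorem IsViol.ne {D : Diagram} (hD : OC D) {T : SSYT D} {j k : ℕ} (h : IsViol T j k) :
    ∀ r, (r, j) ∈ D → T.entry (r, j) ≠ k := by
  intro r hr e
  have h1 := h.1
  rw [cntGe_succ, cntGe_succ D _ j (k + 1)] at h1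
  have h2 := h.2.1 (j + 1) (by omega) k
  have h3 := colCnt_le_one hD T j (k + 1)
  have h4 := colCnt_pos hr e
  omega

/-- At the place of the violation the content inequality fails by exactly one. -/
theorem IsViol.eq {D : Diagram} (hD : OC D) {T : SSYT D} {j k : ℕ} (h : IsViol T j k) :
    cntGe D T.entry j (k + 1) = cntGe D T.entry j k + 1 := by
  have h1 := h.1
  have h4 := colCnt_zero (h.ne hD)
  have e1 := cntGe_succ D T.entry j k
  have e2 := cntGe_succ D T.entry j (k + 1)
  have h2 := h.2.1 (j + 1) (by omega) k
  have h3 := colCnt_le_one hD T j (k + 1)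
  omega

/-- The Bender–Knuth move left of column `j` keeps the place of the violation. -/
theorem IsViol.bk {D : Diagram} (hD : OC D) {T : SSYT D} {j k : ℕ} (h : IsViol T j k) :
    IsViol (bk hD T j k (h.ne hD)) j k := by
  have key : ∀ j' ≥ j, ∀ v, cntGe D (LRProof.bk hD T j k (h.ne hD)).entry j' v =
      cntGe D T.entry j' v := fun j' hj' v => cntGe_bkE D T.entry hj' k v
  refine ⟨?_, ?_, ?_⟩
  · rw [key j le_rfl, key j le_rfl]
    exact h.1
  · intro j' hj' v
    rw [key j' hj'.le, key j' hj'.le]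
    exact h.2.1 j' hj' v
  · intro v hv
    rw [key j le_rfl, key j le_rfl]
    exact h.2.2 v hv

theorem IsViol.not_good {D : Diagram} {T : SSYT D} {j k : ℕ} (h : IsViol T j k) : ¬ Good T := by
  intro hg
  have := hg j k
  have := h.1
  omega

theorem IsViol.lt {D : Diagram} {T : SSYT D} {j k m : ℕ} (h : IsViol T j k) (hT : T ∈ tabs D m) :
    k + 1 < m := by
  have : 0 < cntGe D T.entry j (k + 1) := by
    have := h.1
    omega
  obtain ⟨x, hx⟩ := Finset.card_pos.1 this
  rw [Finset.mem_filter] at hx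
  have := mem_tabs.1 hT x hx.1
  omega

/-- The Bender–Knuth move at the violation interchanges the two relevant exponents of
`ρ + content`. -/
theorem IsViol.alt {D : Diagram} (hD : OC D) {T : SSYT D} {j k n : ℕ} (h : IsViol T j k)
    (hT : T ∈ tabs D (n + 1)) :
    alt n (fun i => rho n i + cnt D (LRProof.bk hD T j k (h.ne hD)).entry i) =
      - alt n (fun i => rho n i + cnt D T.entry i) := by
  have hk := h.lt hT
  obtain ⟨i, rfl⟩ : ∃ i : Fin n, (i : ℕ) = k := ⟨⟨k, by omega⟩, rfl⟩
  apply alt_swap n _ _ i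
  intro v
  obtain ⟨h1, h2, h3⟩ := cnt_bk hD T j i (h.ne hD)
  have e := fun v => cnt_eq D T.entry j v
  have he := h.eq hD
  have hi := i.2
  rcases swap_cases i v with ⟨rfl, h⟩ | ⟨rfl, h⟩ | ⟨hv1, hv2, h⟩
  · rw [h, Fin.val_succ, Fin.val_castSucc, h1, e, rho, rho, Fin.val_succ, Fin.val_castSucc]
    omega
  · rw [h, Fin.val_succ, Fin.val_castSucc, h2, e, rho, rho, Fin.val_succ, Fin.val_castSucc]
    omega
  · rw [h, h3 _ hv1 hv2]

/-- The alternants of the tableaux that are not good cancel in pairs under the Bender–Knuth move at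
their violation. -/
theorem sum_bad {D : Diagram} (hD : OC D) (n : ℕ) :
    ∑ T ∈ (tabs D (n + 1)).filter (fun T => ¬ Good T),
      alt n (fun i => rho n i + cnt D T.entry i) = 0 := by
  have hex : ∀ T : SSYT D, ∃ p : ℕ × ℕ, ¬ Good T → IsViol T p.1 p.2 := by
    intro T
    by_cases hT : Good T
    · exact ⟨(0, 0), fun h => absurd hT h⟩
    · obtain ⟨j, k, h⟩ := exists_viol hT
      exact ⟨(j, k), fun _ => h⟩
  choose p hp using hex
  have hv : ∀ T ∈ (tabs D (n + 1)).filter (fun T => ¬ Good T), IsViol T (p T).1 (p T).2 :=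
    fun T hT => hp T (Finset.mem_filter.1 hT).2
  have hpe : ∀ (T : SSYT D) (hT : IsViol T (p T).1 (p T).2),
      p (bk hD T (p T).1 (p T).2 (hT.ne hD)) = p T := by
    intro T hT
    have h1 := hT.bk hD
    have h2 := hp _ h1.not_good
    obtain ⟨e1, e2⟩ := h2.unique h1
    exact Prod.ext e1 e2
  refine Finset.sum_involution
    (fun T hT => bk hD T (p T).1 (p T).2 ((hv T hT).ne hD)) ?_ ?_ ?_ ?_
  · intro T hT
    rw [(hv T hT).alt hD (Finset.mem_filter.1 hT).1, add_neg_cancel]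
  · intro T hT hne e
    have := (hv T hT).alt hD (Finset.mem_filter.1 hT).1
    rw [e] at this
    exact hne (self_eq_neg.1 this)
  · intro T hT
    have h1 := (hv T hT).bk hD
    exact Finset.mem_filter.2 ⟨bk_mem_tabs hD _ ((hv T hT).lt (Finset.mem_filter.1 hT).1)
      (Finset.mem_filter.1 hT).1, h1.not_good⟩
  · intro T hT
    apply SSYT.ext'
    intro x
    change bkE D (bkE D T.entry _ _) _ _ x = _
    rw [hpe T (hv T hT)]
    exact bkE_bkE hD T _ _ x

/-- The product of an alternant and a skew Schur polynomial: only the good tableaux contribute. -/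
theorem alt_mul_eq_good {D : Diagram} (hD : OC D) (n : ℕ) :
    alt n (rho n) * schurPoly D n = ∑ T ∈ (tabs D (n + 1)).filter Good,
      alt n (fun i => rho n i + cnt D T.entry i) := by
  rw [alt_mul_schurPoly hD, ← Finset.sum_filter_add_sum_filter_not _ Good, sum_bad hD, add_zero]

/-! ### Columns forced by goodness, straight shapes -/

/-- In a good tableau the entries of a suitable set `X` of cells are forced: the cells of `X` in
column `c` are filled with `0, 1, 2, …` from the row `st c` downwards. The set `X` has to be closed
under going up in a column (`h2`) and under going up and to the right, and there a cell that is at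
least as far down its column as the given one must have the cell below it in `X` as well (`h3`).

The proof goes through the columns from right to left. If the first wrong entry of a column is
`u + 1`, then that column contains no `u`, while further right every `u` has a `u + 1` below it;
so the columns from this one on contain more `u + 1` than `u`. -/
theorem canon {D : Diagram} (hD : OC D) {T : SSYT D} (hT : Good T) (X : Set (ℕ × ℕ)) (st : ℕ → ℕ)
    (h1 : ∀ r c, (r, c) ∈ X → (r, c) ∈ D ∧ st c ≤ r ∧ (st c, c) ∈ D)
    (h2 : ∀ r c r', (r, c) ∈ X → (r', c) ∈ D → r' ≤ r → (r', c) ∈ X)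
    (h3 : ∀ r c r' c', (r, c) ∈ X → (r', c') ∈ D → c < c' → r' < r →
      (r', c') ∈ X ∧ (r - st c ≤ r' - st c' → (r' + 1, c') ∈ X)) :
    ∀ c r, (r, c) ∈ X → T.entry (r, c) = r - st c := by
  have main : ∀ d c, wd D ≤ c + d → ∀ r, (r, c) ∈ X → T.entry (r, c) = r - st c := by
    intro d
    induction d with
    | zero =>
      intro c hc r hr
      have := lt_wd (h1 r c hr).1
      simp only at this
      omega
    | succ d ih =>
      intro c hc r
      induction r using Nat.strong_induction_on with
      | _ r ihr =>
      intro hr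
      obtain ⟨hrD, hsr, hsD⟩ := h1 r c hr
      have hlow := mono hD T hsD hrD hsr le_rfl
      by_contra hne
      obtain ⟨u, hu⟩ : ∃ u, T.entry (r, c) = u + 1 := ⟨T.entry (r, c) - 1, by omega⟩
      have hg := hT c u
      rw [cntGe_succ, cntGe_succ D _ c u] at hg
      have p1 := colCnt_pos hrD hu
      have p2 : (D.filter (fun x => x.2 = c ∧ T.entry x = u)).card = 0 := by
        apply colCnt_zero
        intro r' hr' e
        have hlt : r' < r := by
          by_contra hh
          have := mono hD T hrD hr' (by omega) le_rfl
          omega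
        have hX := h2 r c r' hr hr' hlt.le
        have := ihr r' hlt hX
        have := (h1 r' c hX).2.1
        omega
      have p3 : cntGe D T.entry (c + 1) u ≤ cntGe D T.entry (c + 1) (u + 1) := by
        apply Finset.card_le_card_of_injOn (fun x => (x.1 + 1, x.2))
        · rintro ⟨r', c'⟩ hx
          simp only [Finset.coe_filter, Set.mem_ofPred_eq] at hx ⊢
          obtain ⟨hx1, hx2, hx3⟩ := hx
          have hlt : r' < r := by
            by_contra hh
            have hz : (r, c') ∈ D := hD _ hrD _ hx1 _ le_rfl (by simp only; omega)
              (by simp only; omega) le_rfl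
            have := mono hD T hrD hz le_rfl (by omega)
            have := mono hD T hz hx1 (by omega) le_rfl
            omega
          obtain ⟨hX, hX'⟩ := h3 r c r' c' hr hx1 (by omega) hlt
          have e1 := ih c' (by omega) r' hX
          have hX2 := hX' (by omega)
          have e2 := ih c' (by omega) (r' + 1) hX2
          have := (h1 _ _ hX).2.1
          exact ⟨(h1 _ _ hX2).1, hx2, by omega⟩
        · rintro ⟨a, b⟩ _ ⟨a', b'⟩ _ h
          simp only [Prod.mk.injEq, Nat.add_right_cancel_iff] at h ⊢
          exact h
      omega
  intro c r hr
  exact main (wd D) c (by omega) r hr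

theorem mem_diagramOfF {ν : ℕ →₀ ℕ} {r c : ℕ} : (r, c) ∈ diagramOfF ν ↔ c < ν r := by
  simp only [diagramOfF, Finset.mem_biUnion, Finsupp.mem_support_iff, Finset.mem_image,
    Finset.mem_range, Prod.mk.injEq]
  constructor
  · rintro ⟨a, _, b, h, rfl, rfl⟩
    exact h
  · intro h
    exact ⟨r, by omega, c, h, rfl, rfl⟩

theorem OC_diagramOfF {ν : ℕ →₀ ℕ} (hν : Antitone ν) : OC (diagramOfF ν) := by
  rintro ⟨a1, a2⟩ ha ⟨b1, b2⟩ hb ⟨x1, x2⟩ h1 h2 h3 h4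
  rw [mem_diagramOfF] at *
  have := hν h2
  simp only at *
  omega

/-- The tableau of straight shape `ν` whose row `r` is filled with `r`. -/
noncomputable def superTab {ν : ℕ →₀ ℕ} : SSYT (diagramOfF ν) where
  entry x := if x ∈ diagramOfF ν then x.1 else 0
  rowWeak i j h1 h2 := by rw [if_pos h1, if_pos h2]
  colStrict i j h1 h2 := by rw [if_pos h1, if_pos h2]; simp
  zero_outside c hc := if_neg hc

theorem superTab_entry {ν : ℕ →₀ ℕ} {x : ℕ × ℕ} (h : x ∈ diagramOfF ν) :
    (superTab (ν := ν)).entry x = x.1 := if_pos h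

theorem good_superTab {ν : ℕ →₀ ℕ} (hν : Antitone ν) : Good (superTab (ν := ν)) := by
  intro j v
  apply Finset.card_le_card_of_injOn (fun x => (x.1 - 1, x.2))
  · rintro ⟨r, c⟩ hx
    simp only [Finset.coe_filter, Set.mem_ofPred_eq] at hx ⊢
    obtain ⟨hx1, hx2, hx3⟩ := hx
    rw [superTab_entry hx1] at hx3
    simp only at hx3
    subst hx3
    have hm : (v, c) ∈ diagramOfF ν := by
      rw [mem_diagramOfF] at *
      exact hx1.trans_le (hν (Nat.le_succ v))
    exact ⟨hm, hx2, superTab_entry hm⟩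
  · rintro ⟨a, b⟩ ha ⟨a', b'⟩ hb h
    simp only [Finset.coe_filter, Set.mem_ofPred_eq] at ha hb
    rw [superTab_entry ha.1] at ha
    rw [superTab_entry hb.1] at hb
    simp only [Prod.mk.injEq] at h ha hb ⊢
    omega

/-- A straight shape has only one good tableau. -/
theorem good_unique {ν : ℕ →₀ ℕ} (hν : Antitone ν) {T : SSYT (diagramOfF ν)} (hT : Good T) :
    T = superTab := by
  have h := canon (OC_diagramOfF hν) hT (diagramOfF ν : Set (ℕ × ℕ)) (fun _ => 0) ?_ ?_ ?_
  · apply SSYT.ext'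
    rintro ⟨r, c⟩
    by_cases hx : (r, c) ∈ diagramOfF ν
    · rw [h c r hx]
      simp [superTab, hx]
    · rw [T.zero_outside _ hx, superTab.zero_outside _ hx]
  · intro r c hr
    refine ⟨hr, Nat.zero_le _, ?_⟩
    have hr' : (r, c) ∈ diagramOfF ν := hr
    rw [mem_diagramOfF] at *
    exact hr'.trans_le (hν (Nat.zero_le r))
  · intro r c r' _ h _
    exact h
  · intro r c r' c' _ h1 _ h2
    exact ⟨h1, fun h => by omega⟩

theorem cnt_superTab (ν : ℕ →₀ ℕ) (v : ℕ) :
    cnt (diagramOfF ν) (superTab (ν := ν)).entry v = ν v := by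
  have : (diagramOfF ν).filter (fun x => (superTab (ν := ν)).entry x = v) =
      (Finset.range (ν v)).image (fun j => (v, j)) := by
    ext ⟨r, c⟩
    simp only [Finset.mem_filter, Finset.mem_image, Finset.mem_range, Prod.mk.injEq]
    constructor
    · rintro ⟨h1, h2⟩
      rw [superTab_entry h1] at h2
      simp only at h2
      subst h2
      exact ⟨c, mem_diagramOfF.1 h1, rfl, rfl⟩
    · rintro ⟨j, hj, rfl, rfl⟩
      have := mem_diagramOfF.2 hj
      exact ⟨this, superTab_entry this⟩
  rw [cnt, this, Finset.card_image_of_injective _ (fun a b h => (Prod.mk.inj h).2),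
    Finset.card_range]

/-- The bialternant formula for Schur polynomials. -/
theorem alt_mul_straight {ν : ℕ →₀ ℕ} (hν : Antitone ν) (n : ℕ) (hn : ∀ v, n < v → ν v = 0) :
    alt n (rho n) * schurPoly (diagramOfF ν) n = alt n (fun i => rho n i + ν i) := by
  rw [alt_mul_eq_good (OC_diagramOfF hν)]
  have : (tabs (diagramOfF ν) (n + 1)).filter Good = {superTab} := by
    ext T
    rw [Finset.mem_filter, Finset.mem_singleton]
    constructor
    · exact fun h => good_unique hν h.2
    · rintro rfl
      refine ⟨mem_tabs.2 ?_, good_superTab hν⟩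
      rintro ⟨r, c⟩ hx
      have e : superTab.entry (r, c) = r := superTab_entry hx
      rw [e]
      by_contra hh
      rw [mem_diagramOfF, hn r (by omega)] at hx
      omega
  rw [this, Finset.sum_singleton]
  simp only [cnt_superTab]

theorem content_apply {D : Diagram} (T : SSYT D) (v : ℕ) : content T v = cnt D T.entry v := by
  rw [content, Finsupp.finsetSum_apply, cnt, Finset.card_filter]
  refine Finset.sum_congr rfl fun x _ => ?_
  rw [Finsupp.single_apply]

theorem Good.antitone {D : Diagram} {T : SSYT D} (h : Good T) : Antitone (content T) := by
  apply antitone_nat_of_succ_le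
  intro v
  have := h 0 v
  rwa [cntGe_zero, cntGe_zero, ← content_apply, ← content_apply] at this

theorem content_eq_zero {D : Diagram} {T : SSYT D} {n v : ℕ} (h : T ∈ tabs D (n + 1)) (hv : n < v) :
    content T v = 0 := by
  rw [content_apply, cnt, Finset.card_eq_zero, Finset.filter_eq_empty_iff]
  intro x hx e
  have := mem_tabs.1 h x hx
  omega

/-- The Littlewood–Richardson expansion in finitely many variables. -/
theorem schurPoly_expand {D : Diagram} (hD : OC D) (n : ℕ) :
    schurPoly D n = ∑ T ∈ (tabs D (n + 1)).filter Good, schurPoly (diagramOfF (content T)) n := by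
  apply mul_left_cancel₀ (alt_rho_ne_zero n)
  rw [alt_mul_eq_good hD, Finset.mul_sum]
  refine Finset.sum_congr rfl fun T hT => ?_
  rw [Finset.mem_filter] at hT
  rw [alt_mul_straight hT.2.antitone n (fun v hv => content_eq_zero hT.1 hv)]
  simp only [content_apply]

/-- The coefficients of `schurOf D` are coefficients of a Schur polynomial in sufficiently many
variables. -/
theorem schurOf_apply (D : Diagram) (n : ℕ) (d : ℕ →₀ ℕ) (hd : ∀ v, n < v → d v = 0) :
    schurOf D d = MvPolynomial.coeff (Finsupp.equivFunOnFinite.symm fun i : Fin (n + 1) => d i)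
      (schurPoly D n) := by
  have hmon : ∀ p : Fin (n + 1) → ℕ, ∏ i : Fin (n + 1),
      (MvPolynomial.X i : MvPolynomial (Fin (n + 1)) ℤ) ^ p i =
        MvPolynomial.monomial (Finsupp.equivFunOnFinite.symm p) 1 := by
    intro p
    rw [MvPolynomial.monomial_eq, Finsupp.prod_fintype _ _ (by simp)]
    simp
  rw [schurPoly, MvPolynomial.coeff_sum]
  simp only [hmon, MvPolynomial.coeff_monomial]
  rw [Finset.sum_boole]
  simp only [schurOf]
  congr 1
  refine Nat.subtype_card _ fun T => ?_
  rw [Finset.mem_filter, Equiv.apply_eq_iff_eq, mem_tabs]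
  constructor
  · rintro ⟨h1, h2⟩
    ext v
    by_cases hv : n < v
    · rw [hd v hv, content_eq_zero (mem_tabs.2 h1) hv]
    · rw [content_apply]
      exact congrFun h2 ⟨v, by omega⟩
  · rintro rfl
    refine ⟨fun c hc => ?_, by simp only [content_apply]⟩
    by_contra hh
    have h := hd (T.entry c) (by omega)
    rw [content_apply, cnt, Finset.card_eq_zero, Finset.filter_eq_empty_iff] at h
    exact h hc rfl

/-- A good tableau uses every value below each of its entries, so its entries are bounded by the
number of cells. -/
theorem Good.mem_tabs {D : Diagram} {T : SSYT D} (h : Good T) : T ∈ tabs D D.card := by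
  rw [LRProof.mem_tabs]
  intro c hc
  have hpos : ∀ u, 0 < cnt D T.entry (T.entry c - u) := by
    intro u
    induction u with
    | zero => exact Finset.card_pos.2 ⟨c, by simp [hc]⟩
    | succ u ih =>
      rcases Nat.eq_zero_or_pos (T.entry c - u) with h0 | h0
      · rwa [show T.entry c - (u + 1) = T.entry c - u by omega]
      · have := h 0 (T.entry c - (u + 1))
        rw [cntGe_zero, cntGe_zero,
          show T.entry c - (u + 1) + 1 = T.entry c - u by omega] at this
        omega
  have hsub : Finset.range (T.entry c + 1) ⊆ D.image T.entry := by
    intro v hv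
    rw [Finset.mem_range] at hv
    have := hpos (T.entry c - v)
    rw [show T.entry c - (T.entry c - v) = v by omega] at this
    obtain ⟨x, hx⟩ := Finset.card_pos.1 this
    rw [Finset.mem_filter] at hx
    exact Finset.mem_image.2 ⟨x, hx⟩
  have h1 := Finset.card_le_card hsub
  have h2 : (D.image T.entry).card ≤ D.card := Finset.card_image_le
  rw [Finset.card_range] at h1
  omega

/-- The finite set of all good tableaux of shape `D`. -/
noncomputable def goods (D : Diagram) : Finset (SSYT D) := (tabs D D.card).filter Good

theorem mem_goods {D : Diagram} {T : SSYT D} : T ∈ goods D ↔ Good T := by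
  rw [goods, Finset.mem_filter]
  exact ⟨fun h => h.2, fun h => ⟨h.mem_tabs, h⟩⟩

/-- The Littlewood–Richardson rule: the skew Schur function of a convex diagram is the sum, over
its good tableaux, of the Schur functions of their contents. -/
theorem schurOf_expand {D : Diagram} (hD : OC D) :
    schurOf D = ∑ T ∈ goods D, schurOf (diagramOfF (content T)) := by
  apply MvPowerSeries.ext
  intro d
  rw [map_sum]
  obtain ⟨n, hn1, hn2⟩ : ∃ n, D.card ≤ n ∧ ∀ v, n < v → d v = 0 := by
    refine ⟨D.card + d.support.sup id, Nat.le_add_right _ _, fun v hv => ?_⟩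
    by_contra hne
    have := Finset.le_sup (f := id) (Finsupp.mem_support_iff.2 hne)
    simp only [id] at this
    omega
  have hg : goods D = (tabs D (n + 1)).filter Good := by
    ext T
    rw [mem_goods, Finset.mem_filter]
    refine ⟨fun h => ⟨LRProof.mem_tabs.2 fun c hc => ?_, h⟩, fun h => h.2⟩
    have := LRProof.mem_tabs.1 h.mem_tabs c hc
    omega
  have e : ∀ D', MvPowerSeries.coeff d (schurOf D') = MvPolynomial.coeff
      (Finsupp.equivFunOnFinite.symm fun i : Fin (n + 1) => d i) (schurPoly D' n) :=
    fun D' => schurOf_apply D' n d hn2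
  simp only [e]
  rw [schurPoly_expand hD n, MvPolynomial.coeff_sum, hg]

/-! ### Comparing the row foundation with the column foundation -/

/-- Coordinates for the two diagrams of the theorem: a rotated fat staircase occupies the columns
`k, …, n + k - 1` and the rows below `N`, its column `c` starts at row `st c`, and underneath it is
a row (in `R`) or a column (in `C`) of `m` cells. -/
structure Setup (N n k m : ℕ) (st : ℕ → ℕ) (R C : Diagram) : Prop where
  hk : k ≤ 1
  hm : m ≤ n + k
  lt : ∀ c, k ≤ c → c < n + k → st c < N
  anti : ∀ c c', k ≤ c → c < c' → c' < n + k → st c' < st c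
  hR : ∀ r c, (r, c) ∈ R ↔ (k ≤ c ∧ c < n + k ∧ st c ≤ r ∧ r < N) ∨ (r = N ∧ c < m)
  hC : ∀ r c, (r, c) ∈ C ↔
    (k ≤ c ∧ c < n + k ∧ st c ≤ r ∧ r < N) ∨ (N ≤ r ∧ r < N + m ∧ c = 0)

section
variable {N n k m : ℕ} {st : ℕ → ℕ} {R C : Diagram}

theorem Setup.anti' (s : Setup N n k m st R C) {c c' : ℕ} (h1 : k ≤ c) (h2 : c ≤ c')
    (h3 : c' < n + k) : st c' ≤ st c := by
  rcases h2.eq_or_lt with rfl | h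
  · exact le_rfl
  · exact (s.anti c c' h1 h h3).le

theorem Setup.OC_R (s : Setup N n k m st R C) : OC R := by
  rintro ⟨a1, a2⟩ ha ⟨b1, b2⟩ hb ⟨x1, x2⟩ h1 h2 h3 h4
  have hm := s.hm
  simp only at h1 h2 h3 h4
  rw [s.hR] at *
  by_cases hx : x1 < N
  · have ha' : k ≤ a2 ∧ a2 < n + k ∧ st a2 ≤ a1 ∧ a1 < N := by omega
    have := s.anti' ha'.1 h3 (by omega)
    omega
  · omega

theorem Setup.OC_C (s : Setup N n k m st R C) : OC C := by
  rintro ⟨a1, a2⟩ ha ⟨b1, b2⟩ hb ⟨x1, x2⟩ h1 h2 h3 h4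
  simp only at h1 h2 h3 h4
  rw [s.hC] at *
  by_cases hx : x1 < N
  · have ha' : k ≤ a2 ∧ a2 < n + k ∧ st a2 ≤ a1 ∧ a1 < N := by omega
    have := s.anti' ha'.1 h3 (by omega)
    omega
  · omega

/-- In a good tableau of shape `R` every column of the staircase is filled with `0, 1, 2, …`. -/
theorem Setup.canon (s : Setup N n k m st R C) {T : SSYT R} (hT : Good T) {r c : ℕ}
    (h1 : k ≤ c) (h2 : c < n + k) (h3 : st c ≤ r) (h4 : r < N) :
    T.entry (r, c) = r - st c := by
  refine LRProof.canon s.OC_R hT {x | k ≤ x.2 ∧ x.2 < n + k ∧ st x.2 ≤ x.1 ∧ x.1 < N} st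
    ?_ ?_ ?_ c r ⟨h1, h2, h3, h4⟩
  · rintro r c ⟨h1, h2, h3, h4⟩
    simp only at h1 h2 h3 h4
    have := s.lt c h1 h2
    exact ⟨(s.hR _ _).2 (by omega), h3, (s.hR _ _).2 (by omega)⟩
  · rintro r c r' ⟨h1, h2, h3, h4⟩ h5 h6
    simp only at h1 h2 h3 h4
    rw [s.hR] at h5
    simp only [Set.mem_ofPred_eq]
    omega
  · rintro r c r' c' ⟨h1, h2, h3, h4⟩ h5 h6 h7
    simp only at h1 h2 h3 h4
    rw [s.hR] at h5
    simp only [Set.mem_ofPred_eq]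
    omega

/-- The bottom row of a good tableau of shape `R` is strictly increasing: if the value `u` occurred
twice, then in some set of final columns it would occur more often than `u - 1`, because
at most one column of the staircase ends with the value `u - 1`. -/
theorem Setup.strict (s : Setup N n k m st R C) {T : SSYT R} (hT : Good T) {j : ℕ}
    (hj : j + 1 < m) : T.entry (N, j) < T.entry (N, j + 1) := by
  have hk := s.hk
  have hm := s.hm
  have hj0 : (N, j) ∈ R := (s.hR _ _).2 (by omega)
  have hj1 : (N, j + 1) ∈ R := (s.hR _ _).2 (by omega)
  have hle := T.rowWeak N j hj0 hj1
  by_contra hcon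
  have heq : T.entry (N, j) = T.entry (N, j + 1) := by omega
  have hlt := s.lt (j + 1) (by omega) (by omega)
  have hup : (N - 1, j + 1) ∈ R := (s.hR _ _).2 (by omega)
  have hs := mono s.OC_R T hup hj1 (by omega) le_rfl
  obtain ⟨u, hu⟩ : ∃ u, T.entry (N, j) = u + 1 := ⟨T.entry (N, j) - 1, by omega⟩
  have hg := hT j u
  have hmem : (N, j) ∈ R.filter (fun x => j ≤ x.2 ∧ T.entry x = u + 1) :=
    Finset.mem_filter.2 ⟨hj0, le_rfl, hu⟩
  have hA : ∀ r c, (r, c) ∈ R → j ≤ c → T.entry (r, c) = u →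
      k ≤ c ∧ c < n + k ∧ st c ≤ r ∧ r < N ∧ u = r - st c := by
    intro r c h1 h2 h3
    rcases (s.hR r c).1 h1 with h | ⟨rfl, h⟩
    · have := s.canon hT h.1 h.2.1 h.2.2.1 h.2.2.2
      omega
    · have := mono s.OC_R T hj0 h1 le_rfl h2
      omega
  have hcard : cntGe R T.entry j u ≤
      ((R.filter (fun x => j ≤ x.2 ∧ T.entry x = u + 1)).erase (N, j)).card := by
    apply Finset.card_le_card_of_injOn
      (fun x => if x.1 + 1 < N then (x.1 + 1, x.2) else (N, j + 1))
    · rintro ⟨r, c⟩ hx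
      simp only [Finset.coe_filter, Set.mem_ofPred_eq] at hx
      obtain ⟨h1, h2, h3⟩ := hx
      obtain ⟨g1, g2, g3, g4, g5⟩ := hA r c h1 h2 h3
      simp only [Finset.coe_erase, Finset.coe_filter]
      split_ifs with hr
      · refine ⟨⟨(s.hR _ _).2 (by omega), h2, ?_⟩, ?_⟩
        · rw [s.canon hT g1 g2 (by omega) hr]
          omega
        · simp only [Set.mem_singleton_iff, Prod.mk.injEq]
          omega
      · refine ⟨⟨hj1, Nat.le_succ j, by omega⟩, ?_⟩
        simp
    · rintro ⟨r, c⟩ hx ⟨r', c'⟩ hx' h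
      simp only [Finset.coe_filter, Set.mem_ofPred_eq] at hx hx'
      obtain ⟨g1, g2, g3, g4, g5⟩ := hA r c hx.1 hx.2.1 hx.2.2
      obtain ⟨g1', g2', g3', g4', g5'⟩ := hA r' c' hx'.1 hx'.2.1 hx'.2.2
      simp only at h
      split_ifs at h with hr hr' hr' <;> simp only [Prod.mk.injEq] at h ⊢
      · omega
      · omega
      · omega
      · -- both columns end with the value `u`, so they have the same length
        rcases lt_trichotomy c c' with hc | hc | hc
        · have := s.anti c c' g1 hc g2'
          omega
        · omega
        · have := s.anti c' c g1' hc g2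
          omega
  rw [Finset.card_erase_of_mem hmem] at hcard
  have hpos := Finset.card_pos.2 ⟨_, hmem⟩
  unfold cntGe at hg hcard
  omega

/-- The entries of the tableau of shape `C` obtained from one of shape `R` by turning the bottom
row into a column. -/
def turn (N m : ℕ) (f : ℕ × ℕ → ℕ) (x : ℕ × ℕ) : ℕ :=
  if x.1 < N then f x else if x.1 < N + m ∧ x.2 = 0 then f (N, x.1 - N) else 0

theorem turn_lt {f : ℕ × ℕ → ℕ} {r c : ℕ} (h : r < N) : turn N m f (r, c) = f (r, c) :=
  if_pos h

theorem turn_ge {f : ℕ × ℕ → ℕ} {i : ℕ} (h : i < m) : turn N m f (N + i, 0) = f (N, i) := by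
  unfold turn
  rw [if_neg (by simp), if_pos ⟨by simp only; omega, rfl⟩]
  simp

/-- Turning the bottom row of a good tableau into a column gives a good tableau. -/
theorem Setup.exists_turn (s : Setup N n k m st R C) {T : SSYT R} (hT : Good T) :
    ∃ T' : SSYT C, Good T' ∧ content T' = content T ∧ T'.entry = turn N m T.entry := by
  have hk := s.hk
  have hm := s.hm
  let T' : SSYT C :=
    { entry := turn N m T.entry
      zero_outside := by
        rintro ⟨r, c⟩ hc
        rw [s.hC] at hc
        unfold turn
        split_ifs with h1 h2
        · apply T.zero_outside
          rw [s.hR]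
          simp only at h1
          omega
        · simp only at h1 h2
          omega
        · rfl
      rowWeak := by
        intro r c h1 h2
        rw [s.hC] at h1 h2
        have hr : r < N := by omega
        rw [turn_lt hr, turn_lt hr]
        exact T.rowWeak r c ((s.hR _ _).2 (by omega)) ((s.hR _ _).2 (by omega))
      colStrict := by
        intro r c h1 h2
        rw [s.hC] at h1 h2
        rcases lt_trichotomy (r + 1) N with h | h | h
        · rw [turn_lt h, turn_lt (by omega)]
          exact T.colStrict r c ((s.hR _ _).2 (by omega)) ((s.hR _ _).2 (by omega))
        · obtain rfl : c = 0 := by omega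
          have := turn_ge (N := N) (m := m) (f := T.entry) (i := 0) (by omega)
          rw [turn_lt (by omega), h]
          rw [Nat.add_zero] at this
          rw [this, ← h]
          exact T.colStrict r 0 ((s.hR _ _).2 (by omega)) ((s.hR _ _).2 (by omega))
        · obtain rfl : c = 0 := by omega
          obtain ⟨i, rfl⟩ : ∃ i, r = N + i := ⟨r - N, by omega⟩
          rw [add_assoc, turn_ge (by omega), turn_ge (by omega)]
          exact s.strict hT (by omega) }
  have hcnt : ∀ v, cnt C T'.entry v = cnt R T.entry v := by
    intro v
    change cnt C (turn N m T.entry) v = _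
    unfold cnt
    apply Finset.card_nbij' (fun x => if x.1 < N then x else (N, x.1 - N))
      (fun x => if x.1 < N then x else (N + x.2, 0))
    · rintro ⟨r, c⟩ hx
      simp only [Finset.coe_filter, Set.mem_ofPred_eq] at hx ⊢
      obtain ⟨h1, h2⟩ := hx
      rw [s.hC] at h1
      by_cases hr : r < N
      · rw [if_pos hr]
        rw [turn_lt hr] at h2
        exact ⟨(s.hR _ _).2 (by omega), h2⟩
      · rw [if_neg hr]
        obtain rfl : c = 0 := by omega
        obtain ⟨i, rfl⟩ : ∃ i, r = N + i := ⟨r - N, by omega⟩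
        rw [turn_ge (by omega)] at h2
        rw [Nat.add_sub_cancel_left]
        exact ⟨(s.hR _ _).2 (by omega), h2⟩
    · rintro ⟨r, c⟩ hx
      simp only [Finset.coe_filter, Set.mem_ofPred_eq] at hx ⊢
      obtain ⟨h1, h2⟩ := hx
      rw [s.hR] at h1
      by_cases hr : r < N
      · rw [if_pos hr, turn_lt hr]
        exact ⟨(s.hC _ _).2 (by omega), h2⟩
      · rw [if_neg hr, turn_ge (by omega)]
        obtain rfl : r = N := by omega
        exact ⟨(s.hC _ _).2 (by omega), h2⟩
    · rintro ⟨r, c⟩ hx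
      simp only [Finset.coe_filter, Set.mem_ofPred_eq] at hx
      obtain ⟨h1, h2⟩ := hx
      rw [s.hC] at h1
      by_cases hr : r < N
      · simp [hr]
      · simp only [hr, if_false, lt_irrefl, Prod.mk.injEq]
        omega
    · rintro ⟨r, c⟩ hx
      simp only [Finset.coe_filter, Set.mem_ofPred_eq] at hx
      obtain ⟨h1, h2⟩ := hx
      rw [s.hR] at h1
      by_cases hr : r < N
      · simp [hr]
      · have : ¬ N + c < N := by omega
        simp only [hr, if_false, this, Prod.mk.injEq]
        omega
  refine ⟨T', ?_, ?_, rfl⟩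
  · intro j v
    rcases Nat.eq_zero_or_pos j with rfl | hj
    · rw [cntGe_zero, cntGe_zero, hcnt, hcnt, ← cntGe_zero, ← cntGe_zero]
      exact hT 0 v
    · -- the columns `≥ 1` of `C` consist of staircase cells only
      have hA : ∀ r c v, (r, c) ∈ C → j ≤ c → T'.entry (r, c) = v →
          k ≤ c ∧ c < n + k ∧ st c ≤ r ∧ r < N ∧ v = r - st c := by
        intro r c v h1 h2 h3
        rw [s.hC] at h1
        have h4 : T'.entry (r, c) = T.entry (r, c) := turn_lt (by omega)
        have := s.canon hT (r := r) (c := c) (by omega) (by omega) (by omega) (by omega)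
        omega
      apply Finset.card_le_card_of_injOn (fun x => (x.1 - 1, x.2))
      · rintro ⟨r, c⟩ hx
        simp only [Finset.coe_filter, Set.mem_ofPred_eq] at hx ⊢
        obtain ⟨g1, g2, g3, g4, g5⟩ := hA r c _ hx.1 hx.2.1 hx.2.2
        refine ⟨(s.hC _ _).2 (by omega), hx.2.1, ?_⟩
        have h4 : T'.entry (r - 1, c) = T.entry (r - 1, c) := turn_lt (by omega)
        rw [h4, s.canon hT g1 g2 (by omega) (by omega)]
        omega
      · rintro ⟨r, c⟩ hx ⟨r', c'⟩ hx' h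
        simp only [Finset.coe_filter, Set.mem_ofPred_eq] at hx hx'
        obtain ⟨g1, g2, g3, g4, g5⟩ := hA r c _ hx.1 hx.2.1 hx.2.2
        obtain ⟨g1', g2', g3', g4', g5'⟩ := hA r' c' _ hx'.1 hx'.2.1 hx'.2.2
        simp only [Prod.mk.injEq] at h ⊢
        omega
  · ext v
    rw [content_apply, content_apply, hcnt]

/-- The turned filling determines the tableau of shape `R`, since every cell of `R` keeps
its entry. -/
theorem turn_injective (s : Setup N n k m st R C) {S T : SSYT R}
    (h : turn N m S.entry = turn N m T.entry) : S = T := by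
  apply SSYT.ext'
  rintro ⟨r, c⟩
  by_cases hx : (r, c) ∈ R
  · rcases (s.hR r c).1 hx with h1 | ⟨rfl, h1⟩
    · have := congrFun h (r, c)
      rwa [turn_lt h1.2.2.2, turn_lt h1.2.2.2] at this
    · have := congrFun h (r + c, 0)
      rwa [turn_ge h1, turn_ge h1] at this
  · rw [S.zero_outside _ hx, T.zero_outside _ hx]

/-- Turning bottom rows embeds the good tableaux of shape `R` into those of shape `C`, so the
difference is the sum of the Schur functions of the contents of the remaining tableaux. -/
theorem Setup.schurPositive (s : Setup N n k m st R C) :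
    SchurPositive (schurOf C - schurOf R) := by
  choose φ hφ using fun (T : SSYT R) (hT : Good T) => s.exists_turn hT
  set I : Finset (SSYT C) := (goods R).attach.image (fun T => φ T.1 (mem_goods.1 T.2)) with hI
  have hsub : I ⊆ goods C := by
    intro T hT
    obtain ⟨S, -, rfl⟩ := Finset.mem_image.1 hT
    exact mem_goods.2 (hφ _ _).1
  have hsum : ∑ T ∈ I, schurOf (diagramOfF (content T)) = schurOf R := by
    rw [hI, Finset.sum_image, schurOf_expand s.OC_R,
      ← Finset.sum_attach (goods R) (fun T => schurOf (diagramOfF (content T)))]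
    · exact Finset.sum_congr rfl fun T _ => by rw [(hφ T.1 (mem_goods.1 T.2)).2.1]
    · intro S _ T _ h
      apply Subtype.ext
      apply turn_injective s
      rw [← (hφ S.1 (mem_goods.1 S.2)).2.2, ← (hφ T.1 (mem_goods.1 T.2)).2.2]
      exact congrArg SSYT.entry h
  refine ⟨(goods C \ I).image content, fun d => ((goods C \ I).filter (content · = d)).card,
    ?_, ?_⟩
  · intro d hd i
    obtain ⟨T, hT, rfl⟩ := Finset.mem_image.1 hd
    exact (mem_goods.1 (Finset.mem_sdiff.1 hT).1).antitone (Nat.le_succ i)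
  · rw [schurOf_expand s.OC_C, ← hsum, ← Finset.sum_sdiff hsub, add_sub_cancel_right,
      Finset.sum_comp (fun d => schurOf (diagramOfF d)) content]
    exact Finset.sum_congr rfl fun d _ => (natCast_zsmul _ _).symm

end

/-! ### Coordinates of the rotated fat staircase -/

theorem staircaseRows_append (β : List ℕ) (a : ℕ) :
    staircaseRows (β ++ [a]) = List.replicate a (β.length + 1) ++ staircaseRows β := by
  unfold staircaseRows
  rw [List.length_append, List.length_singleton, List.range_succ, List.reverse_append,
    List.reverse_singleton, List.map_append, List.flatten_append]
  congr 1
  · simp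
  · congr 1
    apply List.map_congr_left
    intro i hi
    have : i < β.length := by simpa using hi
    rw [List.getD_append _ _ _ _ this]

/-- Column `c` of the fat staircase has `α_{c+1} + ⋯ + α_n` cells (with `c` counted from `0`). -/
theorem lt_staircaseRows (α : List ℕ) :
    ∀ r c, c < (staircaseRows α).getD r 0 ↔ r < (α.drop c).sum := by
  induction α using List.reverseRecOn with
  | nil => intro r c; simp [staircaseRows]
  | append_singleton β a ih =>
    intro r c
    rw [staircaseRows_append]
    have hd : ((β ++ [a]).drop c).sum =
        (β.drop c).sum + if c ≤ β.length then a else 0 := by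
      split_ifs with h
      · rw [List.drop_append_of_le_length h]
        simp
      · rw [List.drop_eq_nil_of_le (by simp; omega), List.drop_eq_nil_of_le (by omega)]
        simp
    have hz : β.length < c → (β.drop c).sum = 0 := by
      intro h
      rw [List.drop_eq_nil_of_le (by omega)]
      rfl
    rw [hd]
    by_cases hr : r < a
    · rw [List.getD_append _ _ _ _ (by simpa using hr),
        List.getD_eq_getElem _ _ (by simpa using hr), List.getElem_replicate]
      split_ifs with h
      · omega
      · have := hz (by omega)
        omega
    · rw [List.getD_append_right _ _ _ _ (by simpa using hr), ih, List.length_replicate]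
      split_ifs with h
      · omega
      · have := hz (by omega)
        omega

theorem mem_fatStaircase (α : List ℕ) (r c : ℕ) :
    (r, c) ∈ fatStaircase α ↔ r < (α.drop c).sum := by
  rw [← lt_staircaseRows]
  simp only [fatStaircase, diagramOfRows, Finset.mem_biUnion, Finset.mem_range, Finset.mem_image,
    Prod.mk.injEq]
  constructor
  · rintro ⟨i, h1, j, h2, rfl, rfl⟩
    exact h2
  · intro h
    refine ⟨r, ?_, c, h, rfl, rfl⟩
    by_contra hr
    rw [List.getD_eq_default _ _ (by omega)] at h
    omega

theorem drop_sum_le (α : List ℕ) (a b : ℕ) (h : a ≤ b) : (α.drop b).sum ≤ (α.drop a).sum := by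
  obtain ⟨i, rfl⟩ := Nat.exists_eq_add_of_le h
  rw [← List.drop_drop]
  conv_rhs => rw [← List.take_append_drop i (α.drop a), List.sum_append]
  omega

theorem drop_sum_lt {α : List ℕ} (hα : ∀ a ∈ α, 0 < a) {a b : ℕ} (h : a < b)
    (ha : a < α.length) : (α.drop b).sum < (α.drop a).sum := by
  have h1 := drop_sum_le α (a + 1) b h
  have h2 := hα _ (List.getElem_mem ha)
  rw [List.drop_eq_getElem_cons ha, List.sum_cons]
  omega

theorem drop_sum_le_sum (α : List ℕ) (a : ℕ) : (α.drop a).sum ≤ α.sum :=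
  drop_sum_le α 0 a (Nat.zero_le a)

theorem lt_length_of_drop {α : List ℕ} {r c : ℕ} (h : r < (α.drop c).sum) : c < α.length := by
  by_contra hc
  rw [List.drop_eq_nil_of_le (by omega)] at h
  simp at h

section
variable {α : List ℕ}

theorem ht_fatStaircase (hα : ∀ a ∈ α, 0 < a) (hne : α ≠ []) : ht (fatStaircase α) = α.sum := by
  have hlen := List.length_pos_iff.2 hne
  have hpos := drop_sum_lt hα hlen hlen
  simp only [List.drop_length, List.sum_nil, List.drop_zero] at hpos
  apply le_antisymm
  · apply Finset.sup_le
    rintro ⟨r, c⟩ h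
    rw [mem_fatStaircase] at h
    have := drop_sum_le_sum α c
    simp only
    omega
  · have h : (α.sum - 1, 0) ∈ fatStaircase α := by
      rw [mem_fatStaircase, List.drop_zero]
      omega
    have := Finset.le_sup (f := fun c : ℕ × ℕ => c.1 + 1) h
    unfold ht
    simp only at this
    omega

theorem wd_fatStaircase (hα : ∀ a ∈ α, 0 < a) (hne : α ≠ []) :
    wd (fatStaircase α) = α.length := by
  have hlen := List.length_pos_iff.2 hne
  apply le_antisymm
  · apply Finset.sup_le
    rintro ⟨r, c⟩ h
    rw [mem_fatStaircase] at h
    exact lt_length_of_drop h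
  · have h : (0, α.length - 1) ∈ fatStaircase α := by
      rw [mem_fatStaircase]
      have := drop_sum_lt hα (a := α.length - 1) (b := α.length) (by omega) (by omega)
      omega
    have := Finset.le_sup (f := fun c : ℕ × ℕ => c.2 + 1) h
    unfold wd
    simp only at this
    omega

/-- Column `c` of the rotated fat staircase is column `n - 1 - c` of the fat staircase, moved to the
bottom of the `α.sum` rows. -/
theorem mem_rot (hα : ∀ a ∈ α, 0 < a) (hne : α ≠ []) (r c : ℕ) :
    (r, c) ∈ rotD (fatStaircase α) ↔ r < α.sum ∧ c < α.length ∧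
      α.sum - 1 - r < (α.drop (α.length - 1 - c)).sum := by
  unfold rotD
  rw [ht_fatStaircase hα hne, wd_fatStaircase hα hne]
  simp only [Finset.mem_image, Prod.mk.injEq, Prod.exists, mem_fatStaircase]
  constructor
  · rintro ⟨a, b, h, rfl, rfl⟩
    have h1 := lt_length_of_drop h
    have h2 := drop_sum_le_sum α b
    have e1 : α.sum - 1 - (α.sum - 1 - a) = a := by omega
    have e2 : α.length - 1 - (α.length - 1 - b) = b := by omega
    rw [e1, e2]
    omega
  · rintro ⟨h1, h2, h3⟩
    exact ⟨_, _, h3, by omega, by omega⟩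

theorem sum_pos_of (hα : ∀ a ∈ α, 0 < a) (hne : α ≠ []) : 0 < α.sum := by
  have hlen := List.length_pos_iff.2 hne
  have := drop_sum_lt hα hlen hlen
  simp only [List.drop_zero] at this
  omega

theorem bottomLeft_mem (hα : ∀ a ∈ α, 0 < a) (hne : α ≠ []) :
    (α.sum - 1, 0) ∈ rotD (fatStaircase α) := by
  have hlen := List.length_pos_iff.2 hne
  have hpos := sum_pos_of hα hne
  have := drop_sum_lt hα (a := α.length - 1) (b := α.length) (by omega) (by omega)
  rw [mem_rot hα hne, Nat.sub_zero]
  omega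

theorem ht_rot (hα : ∀ a ∈ α, 0 < a) (hne : α ≠ []) : ht (rotD (fatStaircase α)) = α.sum := by
  have hpos := sum_pos_of hα hne
  apply le_antisymm
  · apply Finset.sup_le
    rintro ⟨r, c⟩ h
    rw [mem_rot hα hne] at h
    exact h.1
  · have := Finset.le_sup (f := fun c : ℕ × ℕ => c.1 + 1) (bottomLeft_mem hα hne)
    unfold ht
    simp only at this
    omega

theorem blCol_rot (hα : ∀ a ∈ α, 0 < a) (hne : α ≠ []) : blCol (rotD (fatStaircase α)) = 0 := by
  unfold blCol
  rw [ht_rot hα hne]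
  exact Nat.sInf_eq_zero.2 (Or.inl (bottomLeft_mem hα hne))

theorem tlCol_eq_zero {D : Diagram} (h : (0, 0) ∈ D) : tlCol D = 0 := by
  have h0 : topRow D = 0 := Nat.sInf_eq_zero.2 (Or.inl ⟨0, h⟩)
  unfold tlCol
  rw [h0]
  exact Nat.sInf_eq_zero.2 (Or.inl h)

/-- Coordinates of the diagram with a foundation `F` whose first row starts in its column `0`. -/
theorem mem_SDiagG (hα : ∀ a ∈ α, 0 < a) (hne : α ≠ []) {F : Diagram} (hF : (0, 0) ∈ F)
    (k r c : ℕ) : (r, c) ∈ SDiagG F (rotD (fatStaircase α)) k ↔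
      (k ≤ c ∧ c < α.length + k ∧ α.sum - (α.drop (α.length - 1 - (c - k))).sum ≤ r ∧ r < α.sum) ∨
      (α.sum ≤ r ∧ (r - α.sum, c) ∈ F) := by
  unfold SDiagG
  rw [tlCol_eq_zero hF, ht_rot hα hne, blCol_rot hα hne]
  simp only [Finset.mem_union, Finset.mem_image, Prod.mk.injEq, Prod.exists, mem_rot hα hne]
  apply or_congr
  · constructor
    · rintro ⟨a, b, ⟨h1, h2, h3⟩, rfl, rfl⟩
      rw [add_zero, Nat.add_sub_cancel]
      omega
    · rintro ⟨h1, h2, h3, h4⟩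
      exact ⟨r, c - k, by omega, rfl, by omega⟩
  · constructor
    · rintro ⟨a, b, h, rfl, rfl⟩
      rw [Nat.add_sub_cancel]
      exact ⟨by omega, h⟩
    · rintro ⟨h1, h2⟩
      exact ⟨_, _, h2, by omega, rfl⟩

theorem mem_rowD (m r c : ℕ) : (r, c) ∈ rowD m ↔ r = 0 ∧ c < m := by
  simp only [rowD, Finset.mem_image, Finset.mem_range, Prod.mk.injEq]
  constructor
  · rintro ⟨j, h, rfl, rfl⟩
    exact ⟨rfl, h⟩
  · rintro ⟨rfl, h⟩
    exact ⟨c, h, rfl, rfl⟩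

theorem mem_colD (m r c : ℕ) : (r, c) ∈ colD m ↔ r < m ∧ c = 0 := by
  simp only [colD, Finset.mem_image, Finset.mem_range, Prod.mk.injEq]
  constructor
  · rintro ⟨j, h, rfl, rfl⟩
    exact ⟨h, rfl⟩
  · rintro ⟨h, rfl⟩
    exact ⟨r, h, rfl, rfl⟩

/-- Since every `α_i` is positive, the columns of the rotated fat staircase have strictly increasing
lengths, as `Setup` requires. -/
theorem setup_staircase (hα : ∀ a ∈ α, 0 < a) (hne : α ≠ []) (m k : ℕ) (hm : 1 ≤ m) (hk : k ≤ 1)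
    (hmk : m - k ≤ α.length) :
    Setup α.sum α.length k m (fun c => α.sum - (α.drop (α.length - 1 - (c - k))).sum)
      (SDiagG (rowD m) (rotD (fatStaircase α)) k)
      (SDiagG (colD m) (rotD (fatStaircase α)) k) where
  hk := hk
  hm := by omega
  lt c h1 h2 := by
    have := drop_sum_lt hα (a := α.length - 1 - (c - k)) (b := α.length) (by omega) (by omega)
    have := sum_pos_of hα hne
    omega
  anti c c' h1 h2 h3 := by
    have := drop_sum_lt hα (a := α.length - 1 - (c' - k)) (b := α.length - 1 - (c - k))
      (by omega) (by omega)
    have := drop_sum_le_sum α (α.length - 1 - (c' - k))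
    have := drop_sum_le_sum α (α.length - 1 - (c - k))
    omega
  hR r c := by
    rw [mem_SDiagG hα hne ((mem_rowD _ _ _).2 ⟨rfl, hm⟩), mem_rowD]
    apply or_congr_right
    omega
  hC r c := by
    rw [mem_SDiagG hα hne ((mem_colD _ _ _).2 ⟨hm, rfl⟩), mem_colD]
    apply or_congr_right
    omega

end

end LRProof

/-- for a single row `λ = (m)` with `0 ≤ k ≤ 1` and `m − k ≤ n`,
`s_{S(λ^t, α^◁; k)} − s_{S(λ, α^◁; k)}` is Schur-positive. -/
theorem col_minus_row_schurPositive (α : List ℕ) (hα : ∀ a ∈ α, 0 < a) (hne : α ≠ [])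
    (m k : ℕ) (hm : 1 ≤ m) (hk : k ≤ 1) (hmk : m - k ≤ α.length) :
    SchurPositive
      (schurOf (SDiagG (colD m) (rotD (fatStaircase α)) k) -
       schurOf (SDiagG (rowD m) (rotD (fatStaircase α)) k)) := by
  exact (LRProof.setup_staircase hα hne m k hm hk hmk).schurPositive
end

section
/- Let D = ρ/κ be a sum of fat staircases, with s_D = Σ_ν c^ρ_{κν} s_ν where each ν is a fat staircase, and let λ = (λ_1) be a single row with λ_1 − 1 at most the length of the last row of D. Then s_{S(λ^t, D; 1)} = Σ_ν c^ρ_{κν} s_{S(λ^t, α(ν); 1)}, where λ^t = (1^{λ_1}). -/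
/-!
A foundation that is a single column, placed at distance one, meets the diagram above it in a corner
only. No cell of the column is adjacent to a cell of `E`, so
`s_{S(λ^t, E; 1)} = s_E * s_{λ^t}` for every `E` (`schurOf_SDiagG_col`), and the claim reduces to
`s_D = ∑ c^ρ_{κν} s_{Δ_{α(ν)}}`, multiplied by `s_{λ^t}`.

As `lrCoeff` is defined by counting lattice tableaux, this reduced identity is the
Littlewood–Richardson rule together with the invariance of Schur functions under rotation by 180
degrees. Both are proved for Schur polynomials `sp n D` in `n` variables, whose coefficients are
those of `schurOf D` (`schurOf_eq_coeff`).

The Littlewood–Richardson rule follows Stembridge's proof. Bender–Knuth involutions show that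
Schur polynomials are symmetric (`sum_perm`), whence `a_δ * s_D = ∑ a_{δ + content T}` over all
semistandard fillings `T` (`alt_mul_sp`). A filling is lattice if and only if, for each `J`, the
content of its columns from `J` on is a partition. If `J` is the last column where this fails and
`k` the first descent there, then column `J` has no entry `k`, and the Bender–Knuth involution for
`k`, applied to the columns left of `J`, pairs off the non-lattice fillings with opposite alternants
(`sum_bad`). What remains is the sum over lattice fillings (`alt_mul_sp_eq_lats`). A partition shape
has a single lattice filling, so that `a_δ * s_ν = a_{δ + ν}`; comparing and cancelling `a_δ` gives
the rule (`sp_eq_sum`).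

Rotating a filling and reversing its entries identifies `sp n (rotD D)` with `sp n D` in reversed
variables, which is `sp n D` by symmetry (`sp_rotD`). Finally the lattice fillings are grouped by
the composition `α(ν)` of their content `ν`, which `ν` determines (`fatStaircase_inj`).
-/

open Finset

namespace FatStair

/-! ### Bender–Knuth involutions -/

/-- Semistandardness of a bare filling `T` on the cells of `D`. -/
def SS (D : Diagram) (T : ℕ × ℕ → ℕ) : Prop :=
  (∀ i j, (i, j) ∈ D → (i, j + 1) ∈ D → T (i, j) ≤ T (i, j + 1)) ∧
  (∀ i j, (i, j) ∈ D → (i + 1, j) ∈ D → T (i, j) < T (i + 1, j))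

/-- Order-convexity in `ℕ × ℕ`, which is the only property of skew diagrams used. -/
def Cvx (D : Diagram) : Prop :=
  ∀ i j i' j' a b, (i, j) ∈ D → (i', j') ∈ D → i ≤ a → a ≤ i' → j ≤ b → b ≤ j' → (a, b) ∈ D

lemma ss_le {D : Diagram} {T : ℕ × ℕ → ℕ} (hD : Cvx D) (hT : SS D T) {i j i' j' : ℕ}
    (h : (i, j) ∈ D) (h' : (i', j') ∈ D) (hi : i ≤ i') (hj : j ≤ j') :
    T (i, j) + (i' - i) ≤ T (i', j') := by
  have row : ∀ b, j ≤ b → b ≤ j' → T (i, j) ≤ T (i, b) := by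
    intro b hb
    induction b, hb using Nat.le_induction with
    | base => intro _; exact le_rfl
    | succ b hb ih =>
      intro hb'
      exact (ih (by omega)).trans (hT.1 _ _ (hD i j i' j' _ _ h h' le_rfl hi hb (by omega))
        (hD i j i' j' _ _ h h' le_rfl hi (by omega) hb'))
  have col : ∀ a, i ≤ a → a ≤ i' → T (i, j') + (a - i) ≤ T (a, j') := by
    intro a ha
    induction a, ha using Nat.le_induction with
    | base => intro _; simp
    | succ a ha ih =>
      intro ha'
      have h1 := ih (by omega)
      have h2 := hT.2 _ _ (hD i j i' j' _ _ h h' ha (by omega) hj le_rfl)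
        (hD i j i' j' _ _ h h' (by omega) ha' hj le_rfl)
      omega
  have := row j' hj le_rfl
  have := col i' hi le_rfl
  omega

/-- A cell of `D` on which `H` holds and whose vertical neighbours in `D` do not satisfy `H`.
For `H = Hot k T` these are the free entries of Bender and Knuth. -/
def Free (D : Diagram) (H : ℕ × ℕ → Prop) (c : ℕ × ℕ) : Prop :=
  c ∈ D ∧ H c ∧ ((c.1 + 1, c.2) ∈ D → ¬ H (c.1 + 1, c.2)) ∧
    ∀ i, i + 1 = c.1 → (i, c.2) ∈ D → ¬ H (i, c.2)

/-- The reflection of the interval of free cells of a row. -/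
noncomputable def mirror (D : Diagram) (H : ℕ × ℕ → Prop) (c : ℕ × ℕ) : ℕ × ℕ :=
  (c.1, sInf {j | Free D H (c.1, j)} + sSup {j | Free D H (c.1, j)} - c.2)

/-- The entry of the cell is `k` or `k + 1`. -/
def Hot (k : ℕ) (T : ℕ × ℕ → ℕ) (c : ℕ × ℕ) : Prop := T c = k ∨ T c = k + 1

open Classical in
/-- The Bender–Knuth involution on the cells of `D`: in each row the word of free entries is
reversed, and `k`, `k + 1` are exchanged in it. -/
noncomputable def bk (D : Diagram) (k : ℕ) (T : ℕ × ℕ → ℕ) (c : ℕ × ℕ) : ℕ :=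
  if Free D (Hot k T) c then 2 * k + 1 - T (mirror D (Hot k T) c) else T c

lemma free_interval {D : Diagram} {k : ℕ} {T : ℕ × ℕ → ℕ} (hD : Cvx D) (hT : SS D T)
    {i j j₁ j₂ : ℕ} (h₁ : Free D (Hot k T) (i, j₁)) (h₂ : Free D (Hot k T) (i, j₂))
    (hj₁ : j₁ ≤ j) (hj₂ : j ≤ j₂) : Free D (Hot k T) (i, j) := by
  obtain ⟨m₁, a₁, b₁, -⟩ := h₁
  obtain ⟨m₂, a₂, -, b₂⟩ := h₂
  have m : (i, j) ∈ D := hD _ _ _ _ _ _ m₁ m₂ le_rfl le_rfl hj₁ hj₂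
  have e₁ := ss_le hD hT m₁ m le_rfl hj₁
  have e₂ := ss_le hD hT m m₂ le_rfl hj₂
  simp only [Hot] at *
  refine ⟨m, by simp only [Hot]; omega, ?_, ?_⟩
  · intro hm hh
    have mm : (i + 1, j₁) ∈ D := hD _ _ _ _ _ _ m₁ hm (by omega) le_rfl le_rfl hj₁
    have e₃ := ss_le hD hT m hm (by simp) le_rfl
    have e₄ := ss_le hD hT mm hm (by simp) hj₁
    have e₅ := ss_le hD hT m₁ mm (by simp) le_rfl
    have := b₁ mm
    simp only [Hot] at *
    omega
  · intro i' hi' hm hh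
    simp only at hi' hm hh
    subst hi'
    have mm : (i', j₂) ∈ D := hD _ _ _ _ _ _ hm m₂ (by omega) (by simp) hj₂ le_rfl
    have e₃ := ss_le hD hT hm m (by simp) le_rfl
    have e₄ := ss_le hD hT hm mm (by simp) hj₂
    have e₅ := ss_le hD hT mm m₂ (by simp) le_rfl
    have := b₂ i' rfl mm
    simp only [Hot] at *
    omega

lemma mirror_spec {D : Diagram} {k : ℕ} {T : ℕ × ℕ → ℕ} (hD : Cvx D) (hT : SS D T)
    {i j : ℕ} (h : Free D (Hot k T) (i, j)) :
    ∃ l r, (∀ j', mirror D (Hot k T) (i, j') = (i, l + r - j')) ∧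
      ∀ j', Free D (Hot k T) (i, j') ↔ l ≤ j' ∧ j' ≤ r := by
  set S : Set ℕ := {j | Free D (Hot k T) (i, j)} with hS
  have hne : S.Nonempty := ⟨j, h⟩
  have hbd : BddAbove S := by
    refine ⟨D.sup Prod.snd, fun x hx => ?_⟩
    exact Finset.le_sup (f := Prod.snd) hx.1
  refine ⟨sInf S, sSup S, fun j' => rfl, fun j' => ⟨fun h' => ⟨Nat.sInf_le h', le_csSup hbd h'⟩, ?_⟩⟩
  rintro ⟨h1, h2⟩
  exact free_interval hD hT (Nat.sInf_mem hne) (Nat.sSup_mem hne hbd) h1 h2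

lemma mirror_free {D : Diagram} {k : ℕ} {T : ℕ × ℕ → ℕ} (hD : Cvx D) (hT : SS D T)
    {c : ℕ × ℕ} (h : Free D (Hot k T) c) :
    Free D (Hot k T) (mirror D (Hot k T) c) ∧
      mirror D (Hot k T) (mirror D (Hot k T) c) = c := by
  obtain ⟨i, j⟩ := c
  obtain ⟨l, r, h1, h2⟩ := mirror_spec hD hT h
  have := (h2 j).1 h
  rw [h1, h1, h2]
  refine ⟨by omega, ?_⟩
  ext <;> simp
  omega

lemma hot_bk {D : Diagram} {k : ℕ} {T : ℕ × ℕ → ℕ} (hD : Cvx D) (hT : SS D T) :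
    Hot k (bk D k T) = Hot k T := by
  funext c
  by_cases h : Free D (Hot k T) c
  · have h1 := (mirror_free hD hT h).1.2.1
    have h2 := h.2.1
    simp only [Hot, eq_iff_iff, bk, if_pos h] at *
    omega
  · simp only [Hot, bk, if_neg h]

lemma bk_bk {D : Diagram} {k : ℕ} {T : ℕ × ℕ → ℕ} (hD : Cvx D) (hT : SS D T) :
    bk D k (bk D k T) = T := by
  funext c
  by_cases h : Free D (Hot k T) c
  · obtain ⟨h1, h2⟩ := mirror_free hD hT h
    have h3 := h.2.1
    rw [bk, hot_bk hD hT, if_pos h, bk, if_pos h1, h2]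
    simp only [Hot] at h3
    omega
  · rw [bk, hot_bk hD hT, if_neg h, bk, if_neg h]

lemma bk_of_notMem {D : Diagram} {k : ℕ} {T : ℕ × ℕ → ℕ} {c : ℕ × ℕ} (hc : c ∉ D) :
    bk D k T c = T c := if_neg fun h => hc h.1

lemma bk_eq_or {D : Diagram} {k : ℕ} {T : ℕ × ℕ → ℕ} (hD : Cvx D) (hT : SS D T) (c : ℕ × ℕ) :
    bk D k T c = T c ∨ (Hot k T c ∧ Hot k (bk D k T) c) := by
  by_cases h : Free D (Hot k T) c
  · rw [hot_bk hD hT]; exact Or.inr ⟨h.2.1, h.2.1⟩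
  · exact Or.inl (if_neg h)

lemma bk_ss {D : Diagram} {k : ℕ} {T : ℕ × ℕ → ℕ} (hD : Cvx D) (hT : SS D T) :
    SS D (bk D k T) := by
  have hhot : ∀ c, Hot k (bk D k T) c ↔ Hot k T c := fun c => by rw [hot_bk hD hT]
  constructor
  · intro i j h h'
    have e := hT.1 _ _ h h'
    by_cases f : Free D (Hot k T) (i, j) <;> by_cases f' : Free D (Hot k T) (i, j + 1)
    · obtain ⟨l, r, h1, h2⟩ := mirror_spec hD hT f
      have b := (h2 _).1 f
      have b' := (h2 _).1 f'
      have g := (h2 (l + r - j)).2 (by omega)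
      have g' := (h2 (l + r - (j + 1))).2 (by omega)
      have := ss_le hD hT g'.1 g.1 le_rfl (by omega)
      simp only [bk, if_pos f, if_pos f', h1]
      omega
    · -- an unfree `k` to the right of a free entry would have a `k + 1` below it,
      -- and hence so would the free entry
      have n1 := (hhot _).2 f.2.1
      have n2 := f.2.1
      have : bk D k T (i, j + 1) = T (i, j + 1) := if_neg f'
      rw [this]
      simp only [Hot] at n1 n2
      by_contra hlt
      apply f'
      refine ⟨h', Or.inl (by omega), ?_, ?_⟩
      · intro hm hh
        have mm : (i + 1, j) ∈ D := hD _ _ _ _ _ _ h hm (by omega) le_rfl le_rfl (by simp)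
        have e1 := hT.2 _ _ h mm
        have e2 := hT.1 _ _ mm hm
        apply f.2.2.1 mm
        simp only [Hot] at *
        omega
      · rintro i' hi' hm hh
        simp only at hi'
        subst hi'
        have := hT.2 _ _ hm h'
        simp only [Hot] at *
        omega
    · have n1 := (hhot _).2 f'.2.1
      have n2 := f'.2.1
      have : bk D k T (i, j) = T (i, j) := if_neg f
      rw [this]
      simp only [Hot] at n1 n2
      by_contra hlt
      apply f
      refine ⟨h, Or.inr (by omega), ?_, ?_⟩
      · intro hm hh
        have := hT.2 _ _ h hm
        simp only [Hot] at *
        omega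
      · rintro i' hi' hm hh
        simp only at hi'
        subst hi'
        have mm : (i', j + 1) ∈ D := hD _ _ _ _ _ _ hm h' le_rfl (by simp) (by simp) le_rfl
        have e1 := hT.2 _ _ mm h'
        have e2 := hT.1 _ _ hm mm
        apply f'.2.2.2 i' rfl mm
        simp only [Hot] at *
        omega
    · simpa only [bk, if_neg f, if_neg f'] using e
  · intro i j h h'
    have e := hT.2 _ _ h h'
    by_cases f : Free D (Hot k T) (i, j)
    · have n1 := (hhot _).2 f.2.1
      have n2 := f.2.1
      have n3 := f.2.2.1 h'
      have f' : ¬ Free D (Hot k T) (i + 1, j) := fun f' => n3 f'.2.1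
      have : bk D k T (i + 1, j) = T (i + 1, j) := if_neg f'
      simp only [Hot] at n1 n2 n3
      omega
    · have : bk D k T (i, j) = T (i, j) := if_neg f
      by_cases f' : Free D (Hot k T) (i + 1, j)
      · have n1 := (hhot _).2 f'.2.1
        have n2 := f'.2.1
        have n3 := f'.2.2.2 i rfl h
        simp only [Hot] at n1 n2 n3
        omega
      · simpa only [bk, if_neg f, if_neg f'] using e

/-- The number of cells of `D` with entry `v`. -/
def cnt (D : Diagram) (T : ℕ × ℕ → ℕ) (v : ℕ) : ℕ := (D.filter (fun c => T c = v)).card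

open Classical in
/-- Free cells are matched by reflection; each unfree `k` has a `k + 1` directly below it, and each
unfree `k + 1` a `k` directly above it. -/
lemma cnt_bk_self {D : Diagram} {k : ℕ} {T : ℕ × ℕ → ℕ} (hD : Cvx D) (hT : SS D T) :
    cnt D (bk D k T) k = cnt D T (k + 1) := by
  have dn : ∀ c ∈ D, T c = k → ¬ Free D (Hot k T) c →
      (c.1 + 1, c.2) ∈ D ∧ T (c.1 + 1, c.2) = k + 1 := by
    rintro ⟨i, j⟩ hc hk hf
    by_contra hn
    refine hf ⟨hc, Or.inl hk, fun hm hh => hn ⟨hm, ?_⟩, ?_⟩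
    · have := hT.2 _ _ hc hm
      simp only [Hot] at *; omega
    · rintro i' hi' hm hh
      simp only at hi'
      subst hi'
      have := hT.2 _ _ hm hc
      simp only [Hot] at *; omega
  have up : ∀ c ∈ D, T c = k + 1 → ¬ Free D (Hot k T) c →
      (c.1 - 1 + 1 = c.1) ∧ (c.1 - 1, c.2) ∈ D ∧ T (c.1 - 1, c.2) = k := by
    rintro ⟨i, j⟩ hc hk hf
    by_contra hn
    refine hf ⟨hc, Or.inr hk, fun hm hh => ?_, ?_⟩
    · have := hT.2 _ _ hc hm
      simp only [Hot] at *; omega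
    · rintro i' hi' hm hh
      simp only at hi'
      subst hi'
      have := hT.2 _ _ hm hc
      refine hn ⟨by simp, by simpa using hm, ?_⟩
      simp only [Hot, Nat.add_sub_cancel] at *; omega
  have nf : ∀ c, (c.1 + 1, c.2) ∈ D → T c = k → T (c.1 + 1, c.2) = k + 1 → c ∈ D →
      ¬ Free D (Hot k T) c ∧ ¬ Free D (Hot k T) (c.1 + 1, c.2) := by
    intro c hc h1 h2 hc'
    exact ⟨fun f => f.2.2.1 hc (Or.inr h2), fun f => f.2.2.2 c.1 rfl hc' (Or.inl h1)⟩
  refine Finset.card_bij'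
    (fun c _ => if Free D (Hot k T) c then mirror D (Hot k T) c else (c.1 + 1, c.2))
    (fun c _ => if Free D (Hot k T) c then mirror D (Hot k T) c else (c.1 - 1, c.2)) ?_ ?_ ?_ ?_
  · intro c hc
    simp only [mem_filter] at hc ⊢
    by_cases f : Free D (Hot k T) c
    · have g := (mirror_free hD hT f).1
      have := g.2.1
      simp only [if_pos f, bk, Hot] at *
      exact ⟨g.1, by omega⟩
    · simp only [if_neg f, bk] at *
      exact dn c hc.1 hc.2 f
  · intro c hc
    simp only [mem_filter] at hc ⊢
    by_cases f : Free D (Hot k T) c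
    · obtain ⟨g, e⟩ := mirror_free hD hT f
      simp only [if_pos f, bk, if_pos g, e]
      exact ⟨g.1, by omega⟩
    · have u := up c hc.1 hc.2 f
      have n := nf (c.1 - 1, c.2) (by simpa only [u.1] using hc.1) u.2.2
        (by simpa only [u.1] using hc.2) u.2.1
      simp only [if_neg f, bk, if_neg n.1]
      exact u.2
  · intro c hc
    simp only [mem_filter] at hc ⊢
    by_cases f : Free D (Hot k T) c
    · obtain ⟨g, e⟩ := mirror_free hD hT f
      simp only [if_pos f, if_pos g, e]
    · have hc2 : T c = k := by simpa only [bk, if_neg f] using hc.2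
      have u := dn c hc.1 hc2 f
      have n := nf c u.1 hc2 u.2 hc.1
      simp only [if_neg f, if_neg n.2, Nat.add_sub_cancel]
  · intro c hc
    simp only [mem_filter] at hc ⊢
    by_cases f : Free D (Hot k T) c
    · obtain ⟨g, e⟩ := mirror_free hD hT f
      simp only [if_pos f, if_pos g, e]
    · have u := up c hc.1 hc.2 f
      have n := nf (c.1 - 1, c.2) (by simpa only [u.1] using hc.1) u.2.2
        (by simpa only [u.1] using hc.2) u.2.1
      simp only [if_neg f, if_neg n.1, u.1]

lemma cnt_bk {D : Diagram} {k : ℕ} {T : ℕ × ℕ → ℕ} (hD : Cvx D) (hT : SS D T) (v : ℕ) :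
    cnt D (bk D k T) v = cnt D T (Equiv.swap k (k + 1) v) := by
  by_cases h1 : v = k
  · subst h1; rw [Equiv.swap_apply_left, cnt_bk_self hD hT]
  by_cases h2 : v = k + 1
  · subst h2
    rw [Equiv.swap_apply_right, ← cnt_bk_self hD (bk_ss hD hT), bk_bk hD hT]
  rw [Equiv.swap_apply_of_ne_of_ne h1 h2]
  unfold cnt
  congr 1
  apply Finset.filter_congr
  intro c _
  rcases bk_eq_or hD hT (k := k) c with h | ⟨h, h'⟩
  · rw [h]
  · simp only [Hot] at h h'
    omega

/-! ### Bender–Knuth involutions on the left columns -/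

/-- The cells of `D` in columns left of column `J`. -/
def lt (D : Diagram) (J : ℕ) : Diagram := D.filter (fun c => c.2 < J)

/-- The number of entries `v` in the columns from column `J` on. -/
def cge (D : Diagram) (J : ℕ) (T : ℕ × ℕ → ℕ) (v : ℕ) : ℕ :=
  (D.filter (fun c => J ≤ c.2 ∧ T c = v)).card

lemma cnt_split (D : Diagram) (J : ℕ) (T : ℕ × ℕ → ℕ) (v : ℕ) :
    cnt D T v = cge D J T v + cnt (lt D J) T v := by
  unfold cnt cge lt
  rw [Finset.filter_filter, ← Finset.card_filter_add_card_filter_not (s := D.filter (fun c => T c = v))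
    (fun c => J ≤ c.2), Finset.filter_filter, Finset.filter_filter]
  congr 2 <;> ext c <;> simp <;> tauto

lemma lt_cvx {D : Diagram} (hD : Cvx D) (J : ℕ) : Cvx (lt D J) := by
  intro i j i' j' a b h h' h1 h2 h3 h4
  simp only [lt, mem_filter] at *
  exact ⟨hD _ _ _ _ _ _ h.1 h'.1 h1 h2 h3 h4, by omega⟩

lemma lt_ss {D : Diagram} {T : ℕ × ℕ → ℕ} (hT : SS D T) (J : ℕ) : SS (lt D J) T := by
  refine ⟨fun i j h h' => hT.1 _ _ ?_ ?_, fun i j h h' => hT.2 _ _ ?_ ?_⟩ <;>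
  simp only [lt, mem_filter] at * <;> tauto

/-- A Bender–Knuth involution on the columns left of `J` keeps the whole filling semistandard as
soon as column `J` contains no `k`. -/
lemma bk_lt_ss {D : Diagram} {k J : ℕ} {T : ℕ × ℕ → ℕ} (hD : Cvx D) (hT : SS D T)
    (hJ : ∀ i, (i, J) ∈ D → T (i, J) ≠ k) : SS D (bk (lt D J) k T) := by
  have hs := bk_ss (k := k) (lt_cvx hD J) (lt_ss hT J)
  have out : ∀ i j, J ≤ j → bk (lt D J) k T (i, j) = T (i, j) := fun i j h =>
    bk_of_notMem (by simp [lt, h])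
  constructor
  · intro i j h h'
    by_cases h1 : j + 1 < J
    · exact hs.1 _ _ (by simp only [lt, mem_filter]; exact ⟨h, by omega⟩)
        (by simp only [lt, mem_filter]; exact ⟨h', by omega⟩)
    · have e := hT.1 _ _ h h'
      rw [out i (j + 1) (by omega)]
      by_cases h2 : j < J
      · obtain rfl : J = j + 1 := by omega
        have := hJ i h'
        rcases bk_eq_or (k := k) (lt_cvx hD (j + 1)) (lt_ss hT (j + 1)) (i, j) with h3 | ⟨h3, h4⟩
        · omega
        · simp only [Hot] at h3 h4; omega
      · rwa [out i j (by omega)]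
  · intro i j h h'
    by_cases h1 : j < J
    · exact hs.2 _ _ (by simp only [lt, mem_filter]; exact ⟨h, by omega⟩)
        (by simp only [lt, mem_filter]; exact ⟨h', by omega⟩)
    · rw [out _ _ (by omega), out _ _ (by omega)]
      exact hT.2 _ _ h h'

lemma cge_bk (D : Diagram) {k J J' : ℕ} (T : ℕ × ℕ → ℕ) (h : J ≤ J') (v : ℕ) :
    cge D J' (bk (lt D J) k T) v = cge D J' T v := by
  unfold cge
  congr 1
  apply Finset.filter_congr
  intro c _
  by_cases hc : J' ≤ c.2
  · rw [bk_of_notMem]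
    simp only [lt, mem_filter]; omega
  · simp [hc]

/-! ### The lattice condition by columns -/

/-- The lattice condition of `IsLattice` for a bare filling. -/
def Lat (D : Diagram) (T : ℕ × ℕ → ℕ) : Prop :=
  ∀ c ∈ D, ∀ v : ℕ,
    (D.filter (fun c' => ReadBefore c' c ∧ T c' = v + 1)).card ≤
    (D.filter (fun c' => ReadBefore c' c ∧ T c' = v)).card

/-- Stembridge's form of the lattice condition: the content of the columns from `J` on is a
partition, for each `J`. -/
def Good (D : Diagram) (T : ℕ × ℕ → ℕ) : Prop := ∀ J v, cge D J T (v + 1) ≤ cge D J T v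

lemma card_filter_split (D : Diagram) (p : ℕ × ℕ → Prop) [DecidablePred p] (J : ℕ) :
    (D.filter p).card = (D.filter (fun c => J ≤ c.2 ∧ p c)).card +
      (D.filter (fun c => c.2 < J ∧ p c)).card := by
  rw [← Finset.card_filter_add_card_filter_not (s := D.filter p)
    (fun c => J ≤ c.2), Finset.filter_filter, Finset.filter_filter]
  congr 2 <;> ext c <;> simp <;> tauto

lemma good_of_lat {D : Diagram} {T : ℕ × ℕ → ℕ} (hD : Cvx D) (hT : SS D T) (h : Lat D T) :
    Good D T := by
  intro J v
  set S := D.filter (fun c => J ≤ c.2 ∧ T c = v + 1) with hS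
  rcases S.eq_empty_or_nonempty with hne | hne
  · simp [cge, ← hS, hne]
  obtain ⟨s, hs, hmax⟩ := Finset.exists_max_image S Prod.fst hne
  obtain ⟨r, js⟩ := s
  rw [hS, mem_filter] at hs
  obtain ⟨c, hc, hmin⟩ := Finset.exists_min_image (D.filter (fun c => c.1 = r ∧ T c = v + 1))
    Prod.snd ⟨(r, js), by simp only [mem_filter]; tauto⟩
  obtain ⟨r', jc⟩ := c
  simp only [mem_filter] at hc hmin hs hmax
  obtain ⟨hcD, rfl, hcv⟩ := hc
  -- the prefix ends at the last `v + 1` read in the lowest row having one in the columns `≥ J`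
  have key := h _ hcD v
  rw [card_filter_split D _ J, card_filter_split D (fun c' => ReadBefore c' _ ∧ T c' = v) J] at key
  have e1 : S.card ≤ (D.filter (fun c => J ≤ c.2 ∧ ReadBefore c (r', jc) ∧ T c = v + 1)).card := by
    apply Finset.card_le_card
    intro x hx
    have h1 := hmax x hx
    rw [hS, mem_filter] at hx
    simp only [mem_filter]
    refine ⟨hx.1, hx.2.1, ?_, hx.2.2⟩
    rcases Nat.lt_or_ge x.1 r' with h2 | h2
    · exact Or.inl h2
    · exact Or.inr ⟨by omega, hmin x ⟨hx.1, by omega, hx.2.2⟩⟩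
  have e2 : (D.filter (fun c => J ≤ c.2 ∧ ReadBefore c (r', jc) ∧ T c = v)).card ≤ cge D J T v := by
    apply Finset.card_le_card
    intro x hx
    simp only [mem_filter] at hx ⊢
    tauto
  have e3 : (D.filter (fun c => c.2 < J ∧ ReadBefore c (r', jc) ∧ T c = v)).card ≤
      (D.filter (fun c => c.2 < J ∧ ReadBefore c (r', jc) ∧ T c = v + 1)).card := by
    -- a `v` of the prefix in a column `< J` has a `v + 1` below it
    refine Finset.card_le_card_of_injOn (fun c => (c.1 + 1, c.2)) ?_ ?_
    · rintro ⟨i, j⟩ hx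
      obtain ⟨hxD, hjJ, hrb, hv⟩ := mem_filter.1 (Finset.mem_coe.1 hx)
      refine Finset.mem_coe.2 (mem_filter.2 ?_)
      simp only [ReadBefore] at hrb ⊢
      have hi : i < r' := by
        rcases hrb with h1 | ⟨rfl, h1⟩
        · exact h1
        · have := ss_le hD hT hcD hxD le_rfl h1
          omega
      have m1 : (i + 1, j) ∈ D := hD _ _ _ _ _ _ hxD hs.1 (by omega) hi le_rfl (by omega)
      have m2 : (r', j) ∈ D := hD _ _ _ _ _ _ hxD hs.1 (by omega) le_rfl le_rfl (by omega)
      have f1 := ss_le hD hT m2 hs.1 le_rfl (by omega)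
      have f2 := ss_le hD hT m1 m2 hi le_rfl
      have f3 := hT.2 _ _ hxD m1
      obtain rfl : r' = i + 1 := by omega
      have := hmin (i + 1, j) ⟨m1, rfl, by omega⟩
      exact ⟨m1, hjJ, Or.inr ⟨rfl, this⟩, by omega⟩
    · rintro ⟨i, j⟩ _ ⟨i', j'⟩ _ he
      simpa using he
  have : cge D J T (v + 1) = S.card := rfl
  omega

lemma lat_of_good {D : Diagram} {T : ℕ × ℕ → ℕ} (hD : Cvx D) (hT : SS D T) (h : Good D T) :
    Lat D T := by
  intro c hc v
  set P := D.filter (fun c' => ReadBefore c' c ∧ T c' = v + 1) with hP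
  rcases P.eq_empty_or_nonempty with hne | hne
  · simp [hne]
  -- the last `v + 1` of the prefix in reading order
  obtain ⟨⟨r, j⟩, hs, hmax⟩ := Finset.exists_max_image P
    (fun c => toLex (c.1, OrderDual.toDual c.2)) hne
  rw [hP, mem_filter] at hs
  obtain ⟨hsD, hsc, hsv⟩ := hs
  have hmax' : ∀ x ∈ P, x.1 < r ∨ (x.1 = r ∧ j ≤ x.2) := by
    intro x hx
    have := hmax x hx
    rw [Prod.Lex.le_iff] at this
    simpa using this
  have sub : ∀ x : ℕ × ℕ, (x.1 < r ∨ (x.1 = r ∧ j ≤ x.2)) → ReadBefore x c := by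
    intro x hx
    simp only [ReadBefore] at *
    omega
  refine le_trans (Finset.card_le_card ?_) (le_trans (h j v) (Finset.card_le_card ?_))
  · intro x hx
    have h1 := hmax' x hx
    rw [hP, mem_filter] at hx
    simp only [mem_filter]
    refine ⟨hx.1, ?_, hx.2.2⟩
    by_contra hlt
    have := ss_le hD hT hx.1 hsD (by omega) (by omega)
    simp only [Prod.mk.eta] at this
    omega
  · intro x hx
    simp only [mem_filter] at hx ⊢
    refine ⟨hx.1, sub x ?_, hx.2.2⟩
    by_contra hlt
    have := ss_le hD hT hsD hx.1 (by omega) hx.2.1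
    simp only [Prod.mk.eta] at this
    omega

/-! ### Alternants and the symmetry of Schur polynomials -/

/-- The alternant `a_μ = det (x_i ^ μ_j)`. -/
noncomputable def alt {n : ℕ} (μ : Fin n → ℕ) : MvPolynomial (Fin n) ℤ :=
  (Matrix.of fun i j => (MvPolynomial.X i : MvPolynomial (Fin n) ℤ) ^ μ j).det

/-- `δ = (n - 1, …, 1, 0)`. -/
def del (n : ℕ) : Fin n → ℕ := fun i => n - 1 - i

lemma alt_swap {n : ℕ} (μ : Fin n → ℕ) {a b : Fin n} (h : a ≠ b) :
    alt (μ ∘ Equiv.swap a b) = - alt μ := by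
  have := Matrix.det_permute' (Equiv.swap a b)
    (Matrix.of fun i j => (MvPolynomial.X i : MvPolynomial (Fin n) ℤ) ^ μ j)
  rw [Equiv.Perm.sign_swap h] at this
  simp only [Units.val_neg, Units.val_one, Int.cast_neg, Int.cast_one, neg_mul, one_mul] at this
  exact this

lemma alt_del_ne_zero (n : ℕ) : alt (del n) ≠ 0 := by
  have h := Matrix.det_permute' (Fin.revPerm)
    (Matrix.vandermonde fun i : Fin n => (MvPolynomial.X i : MvPolynomial (Fin n) ℤ))
  have h2 : alt (del n) = ((Matrix.vandermonde
      fun i : Fin n => (MvPolynomial.X i : MvPolynomial (Fin n) ℤ)).submatrix id Fin.revPerm).det := by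
    unfold alt
    congr 1
    ext1 i j
    simp only [Matrix.of_apply, Matrix.submatrix_apply, Matrix.vandermonde_apply, del, id,
      Fin.revPerm_apply, Fin.val_rev]
    congr 1
    omega
  rw [h2, h]
  refine mul_ne_zero ?_ (Matrix.det_vandermonde_ne_zero_iff.2 (MvPolynomial.X_injective))
  rcases Int.units_eq_one_or (Equiv.Perm.sign (Fin.revPerm : Equiv.Perm (Fin n))) with h | h <;>
    simp [h]

lemma tabs_finite (n : ℕ) (D : Diagram) :
    {T : ℕ × ℕ → ℕ | SS D T ∧ (∀ c ∈ D, T c < n) ∧ ∀ c ∉ D, T c = 0}.Finite := by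
  refine (Set.finite_range fun (f : D → Fin n) (c : ℕ × ℕ) =>
    if h : c ∈ D then (f ⟨c, h⟩ : ℕ) else 0).subset ?_
  rintro T ⟨-, h1, h2⟩
  refine ⟨fun c => ⟨T c, h1 c c.2⟩, ?_⟩
  funext c
  by_cases h : c ∈ D
  · simp [h]
  · simp [h, h2 c h]

/-- The semistandard fillings of `D` with entries `< n`. -/
noncomputable def tabs (n : ℕ) (D : Diagram) : Finset (ℕ × ℕ → ℕ) := (tabs_finite n D).toFinset

lemma mem_tabs {n : ℕ} {D : Diagram} {T : ℕ × ℕ → ℕ} :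
    T ∈ tabs n D ↔ SS D T ∧ (∀ c ∈ D, T c < n) ∧ ∀ c ∉ D, T c = 0 := by
  simp [tabs]

lemma bk_mem_tabs {n : ℕ} {D : Diagram} {T : ℕ × ℕ → ℕ} {k J : ℕ} (hD : Cvx D)
    (hT : T ∈ tabs n D) (hk : k + 1 < n) (hJ : ∀ i, (i, J) ∈ D → T (i, J) ≠ k) :
    bk (lt D J) k T ∈ tabs n D := by
  rw [mem_tabs] at *
  refine ⟨bk_lt_ss hD hT.1 hJ, ?_, ?_⟩
  · intro c hc
    rcases bk_eq_or (k := k) (lt_cvx hD J) (lt_ss hT.1 J) c with h | ⟨-, h⟩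
    · rw [h]; exact hT.2.1 c hc
    · simp only [Hot] at h; omega
  · intro c hc
    rw [bk_of_notMem (by simp [lt, hc]), hT.2.2 c hc]

/-- The Schur polynomial of `D` in `n` variables. -/
noncomputable def sp (n : ℕ) (D : Diagram) : MvPolynomial (Fin n) ℤ :=
  ∑ T ∈ tabs n D, ∏ i : Fin n, MvPolynomial.X i ^ cnt D T i

lemma swap_val {n : ℕ} {k : ℕ} (h : k + 1 < n) (i : Fin n) :
    Equiv.swap k (k + 1) (i : ℕ) =
      (Equiv.swap (⟨k, by omega⟩ : Fin n) ⟨k + 1, h⟩ i : Fin n) := by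
  simp only [Equiv.swap_apply_def, Fin.ext_iff]
  split_ifs <;> rfl

/-- Symmetry of the Schur polynomial, stated for any function of the content. -/
lemma sum_perm {M : Type*} [AddCommMonoid M] {n : ℕ} {D : Diagram} (hD : Cvx D)
    (F : (Fin n → ℕ) → M) (w : Equiv.Perm (Fin n)) :
    ∑ T ∈ tabs n D, F (fun i => cnt D T (w i)) = ∑ T ∈ tabs n D, F (fun i => cnt D T i) := by
  obtain _ | m := n
  · congr 1; funext T; congr 1; funext i; exact i.elim0
  have hw : w ∈ Submonoid.closure
      (Set.range fun i : Fin m => Equiv.swap i.castSucc i.succ) := by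
    rw [Equiv.Perm.mclosure_swap_castSucc_succ]; trivial
  induction hw using Submonoid.closure_induction_left generalizing F with
  | one => rfl
  | mul_left x hx y _ ih =>
    obtain ⟨k, rfl⟩ := hx
    rw [← ih]
    set J := D.sup Prod.snd + 1
    have hlt : lt D J = D := by
      ext c
      simp only [lt, mem_filter, and_iff_left_iff_imp]
      exact fun hc => Nat.lt_succ_of_le (Finset.le_sup (f := Prod.snd) hc)
    have hmem : ∀ T ∈ tabs (m + 1) D, bk D k T ∈ tabs (m + 1) D := by
      intro T hT
      have := bk_mem_tabs (J := J) (k := k) hD hT (by omega) ?_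
      · rwa [hlt] at this
      · intro i hi
        rw [← hlt] at hi
        simp [lt] at hi
    refine Finset.sum_bij' (fun T _ => bk D k T) (fun T _ => bk D k T) hmem hmem
      (fun T hT => bk_bk hD (mem_tabs.1 hT).1) (fun T hT => bk_bk hD (mem_tabs.1 hT).1) ?_
    intro T hT
    congr 1
    funext i
    rw [cnt_bk hD (mem_tabs.1 hT).1, swap_val (n := m + 1) (by omega)]
    rfl

lemma alt_mul_sp {n : ℕ} {D : Diagram} (hD : Cvx D) :
    alt (del n) * sp n D = ∑ T ∈ tabs n D, alt (fun i => del n i + cnt D T i) := by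
  have hs : ∀ w : Equiv.Perm (Fin n), sp n D =
      ∑ T ∈ tabs n D, ∏ i : Fin n, MvPolynomial.X (w i) ^ cnt D T i := by
    intro w
    rw [sp, ← sum_perm hD (fun u => ∏ i : Fin n, (MvPolynomial.X i : MvPolynomial (Fin n) ℤ) ^ u i) w⁻¹]
    refine Finset.sum_congr rfl fun T _ => ?_
    rw [← Equiv.prod_comp w]
    simp
  simp only [alt, Matrix.det_apply]
  rw [Finset.sum_mul, Finset.sum_comm]
  refine Finset.sum_congr rfl fun w _ => ?_
  rw [hs w, Finset.mul_sum]
  refine Finset.sum_congr rfl fun T _ => ?_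
  simp only [Matrix.of_apply, pow_add, Finset.prod_mul_distrib, smul_mul_assoc]

/-! ### Cancellation of the non-lattice fillings -/

/-- The last column from which on the content of `T` is not a partition. -/
noncomputable def badCol (D : Diagram) (T : ℕ × ℕ → ℕ) : ℕ :=
  sSup {J | ∃ v, cge D J T v < cge D J T (v + 1)}

/-- The first descent of the content of the columns from `badCol` on. -/
noncomputable def badVal (D : Diagram) (T : ℕ × ℕ → ℕ) : ℕ :=
  sInf {v | cge D (badCol D T) T v < cge D (badCol D T) T (v + 1)}

lemma bad_bdd (D : Diagram) (T : ℕ × ℕ → ℕ) :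
    BddAbove {J | ∃ v, cge D J T v < cge D J T (v + 1)} := by
  refine ⟨D.sup Prod.snd, ?_⟩
  rintro J ⟨v, hv⟩
  obtain ⟨c, hc⟩ := Finset.card_pos.1 (lt_of_le_of_lt (Nat.zero_le _) hv)
  rw [mem_filter] at hc
  exact hc.2.1.trans (Finset.le_sup (f := Prod.snd) hc.1)

lemma bad_spec {D : Diagram} {T : ℕ × ℕ → ℕ} (h : ¬ Good D T) :
    cge D (badCol D T) T (badVal D T) < cge D (badCol D T) T (badVal D T + 1) ∧
    ∀ J, badCol D T < J → ∀ v, cge D J T (v + 1) ≤ cge D J T v := by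
  simp only [Good, not_forall, not_le] at h
  have h1 := Nat.sSup_mem h (bad_bdd D T)
  refine ⟨Nat.sInf_mem (s := {v | cge D (badCol D T) T v < cge D (badCol D T) T (v + 1)}) h1, ?_⟩
  intro J hJ v
  by_contra hlt
  exact absurd (le_csSup (bad_bdd D T) ⟨v, not_le.1 hlt⟩) (not_le.2 hJ)

lemma bad_congr {D : Diagram} {T T' : ℕ × ℕ → ℕ} (h : ¬ Good D T)
    (hc : ∀ J, badCol D T ≤ J → ∀ v, cge D J T' v = cge D J T v) :
    ¬ Good D T' ∧ badCol D T' = badCol D T ∧ badVal D T' = badVal D T := by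
  obtain ⟨h1, h2⟩ := bad_spec h
  have e : badCol D T' = badCol D T := by
    refine IsGreatest.csSup_eq ⟨⟨badVal D T, ?_⟩, ?_⟩
    · rwa [hc _ le_rfl, hc _ le_rfl]
    · rintro J ⟨v, hv⟩
      by_contra hlt
      rw [hc J (by omega), hc J (by omega)] at hv
      have := h2 J (by omega) v
      omega
  refine ⟨fun hg => ?_, e, ?_⟩
  · have := hg (badCol D T) (badVal D T)
    rw [hc _ le_rfl, hc _ le_rfl] at this
    omega
  · simp only [badVal, e, hc _ le_rfl]

/-- At the offending column the content fails to be a partition by exactly one, and this column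
contains no entry `badVal`. -/
lemma bad_step {D : Diagram} {T : ℕ × ℕ → ℕ} (hD : Cvx D) (hT : SS D T) (h : ¬ Good D T) :
    (∀ i, (i, badCol D T) ∈ D → T (i, badCol D T) ≠ badVal D T) ∧
    cge D (badCol D T) T (badVal D T + 1) = cge D (badCol D T) T (badVal D T) + 1 := by
  obtain ⟨h1, h2⟩ := bad_spec h
  set J := badCol D T
  set k := badVal D T
  have h3 := h2 (J + 1) (by omega) k
  have split : ∀ v, cge D J T v = cge D (J + 1) T v +
      (D.filter (fun c => c.2 = J ∧ T c = v)).card := by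
    intro v
    unfold cge
    rw [← Finset.card_filter_add_card_filter_not (s := D.filter _) (fun c => J + 1 ≤ c.2),
      Finset.filter_filter, Finset.filter_filter]
    congr 2 <;> ext c <;> simp only [mem_filter] <;> constructor <;> rintro ⟨a, b⟩ <;>
      refine ⟨a, ?_⟩ <;> omega
  have one : ∀ v, (D.filter (fun c => c.2 = J ∧ T c = v)).card ≤ 1 := by
    intro v
    rw [Finset.card_le_one]
    rintro ⟨i, j⟩ ha ⟨i', j'⟩ hb
    simp only [mem_filter] at ha hb
    obtain ⟨ha, rfl, ha'⟩ := ha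
    obtain ⟨hb, rfl, hb'⟩ := hb
    rcases le_total i i' with hi | hi
    · have := ss_le hD hT ha hb hi le_rfl
      ext <;> simp; omega
    · have := ss_le hD hT hb ha hi le_rfl
      ext <;> simp; omega
  have s1 := split k
  have s2 := split (k + 1)
  have o1 := one k
  have o2 := one (k + 1)
  refine ⟨fun i hi he => ?_, by omega⟩
  have : 0 < (D.filter (fun c => c.2 = J ∧ T c = k)).card :=
    Finset.card_pos.2 ⟨(i, J), mem_filter.2 ⟨hi, rfl, he⟩⟩
  omega

open Classical in
/-- Stembridge's cancellation: the fillings violating the lattice condition are paired off by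
Bender–Knuth involutions left of the offending column, which negate the alternant. -/
lemma sum_bad {n : ℕ} {D : Diagram} (hD : Cvx D) :
    ∑ T ∈ (tabs n D).filter (fun T => ¬ Good D T), alt (fun i : Fin n => del n i + cnt D T i) = 0 := by
  have main : ∀ T ∈ (tabs n D).filter (fun T => ¬ Good D T),
      bk (lt D (badCol D T)) (badVal D T) T ∈ (tabs n D).filter (fun T => ¬ Good D T) ∧
      bk (lt D (badCol D (bk (lt D (badCol D T)) (badVal D T) T)))
        (badVal D (bk (lt D (badCol D T)) (badVal D T) T))
        (bk (lt D (badCol D T)) (badVal D T) T) = T ∧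
      alt (fun i : Fin n => del n i + cnt D (bk (lt D (badCol D T)) (badVal D T) T) i) =
        - alt (fun i : Fin n => del n i + cnt D T i) := by
    intro T hT
    rw [mem_filter] at hT
    obtain ⟨hT, hg⟩ := hT
    have hT' := mem_tabs.1 hT
    obtain ⟨hJ, h1⟩ := bad_step hD hT'.1 hg
    have hb := bad_congr hg (T' := bk (lt D (badCol D T)) (badVal D T) T)
      (fun J hJ v => cge_bk D T hJ v)
    have hk : badVal D T + 1 < n := by
      obtain ⟨c, hc⟩ := Finset.card_pos.1 ((Nat.succ_pos _).trans_eq h1.symm)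
      rw [mem_filter] at hc
      rw [← hc.2.2]
      exact hT'.2.1 c hc.1
    refine ⟨mem_filter.2 ⟨bk_mem_tabs hD hT hk hJ, hb.1⟩, ?_, ?_⟩
    · rw [hb.2.1, hb.2.2, bk_bk (lt_cvx hD _) (lt_ss hT'.1 _)]
    · rw [← alt_swap _ (a := ⟨badVal D T, by omega⟩) (b := ⟨badVal D T + 1, hk⟩)
        (by simp)]
      congr 1
      funext i
      simp only [Function.comp]
      rw [cnt_split D (badCol D T), cnt_split D (badCol D T) T, cge_bk D T le_rfl,
        cnt_bk (lt_cvx hD _) (lt_ss hT'.1 _), swap_val hk]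
      by_cases e1 : i = ⟨badVal D T, by omega⟩
      · subst e1
        rw [Equiv.swap_apply_left]
        simp only [del]
        omega
      by_cases e2 : i = ⟨badVal D T + 1, hk⟩
      · subst e2
        rw [Equiv.swap_apply_right]
        simp only [del]
        omega
      rw [Equiv.swap_apply_of_ne_of_ne e1 e2]
  refine Finset.sum_involution (fun T _ => bk (lt D (badCol D T)) (badVal D T) T) ?_ ?_
    (fun T hT => (main T hT).1) (fun T hT => (main T hT).2.1)
  · intro T hT
    rw [(main T hT).2.2, add_neg_cancel]
  · intro T hT hne he
    have := (main T hT).2.2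
    rw [he] at this
    exact hne (self_eq_neg.1 this)

open Classical in
/-- The semistandard lattice fillings of `D` with entries `< n`. -/
noncomputable def lats (n : ℕ) (D : Diagram) : Finset (ℕ × ℕ → ℕ) := (tabs n D).filter (Lat D)

/-- The Littlewood–Richardson rule, multiplied by `a_δ`. -/
lemma alt_mul_sp_eq_lats {n : ℕ} {D : Diagram} (hD : Cvx D) :
    alt (del n) * sp n D = ∑ T ∈ lats n D, alt (fun i => del n i + cnt D T i) := by
  classical
  rw [alt_mul_sp hD, ← Finset.sum_filter_add_sum_filter_not _ (Good D), sum_bad hD, add_zero]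
  refine Finset.sum_congr ?_ fun _ _ => rfl
  ext T
  simp only [lats, mem_filter]
  refine and_congr_right fun hT => ?_
  exact ⟨lat_of_good hD (mem_tabs.1 hT).1, good_of_lat hD (mem_tabs.1 hT).1⟩

/-! ### Partition shapes -/

/-- The content of a bare filling. -/
noncomputable def con (D : Diagram) (T : ℕ × ℕ → ℕ) : ℕ →₀ ℕ := ∑ c ∈ D, Finsupp.single (T c) 1

lemma con_apply (D : Diagram) (T : ℕ × ℕ → ℕ) (v : ℕ) : con D T v = cnt D T v := by
  simp [con, cnt, Finsupp.finsetSum_apply, Finsupp.single_apply, Finset.sum_boole]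

lemma con_ne_zero {D : Diagram} {T : ℕ × ℕ → ℕ} {v : ℕ} :
    con D T v ≠ 0 ↔ ∃ c ∈ D, T c = v := by
  rw [con_apply, cnt, Finset.card_ne_zero]
  simp [Finset.Nonempty]

lemma rowContent_eq (D : Diagram) : rowContent D = con D Prod.fst := rfl

/-- Lower sets of `ℕ × ℕ`, that is, partition shapes. -/
def Straight (D : Diagram) : Prop :=
  ∀ i j i' j', (i, j) ∈ D → i' ≤ i → j' ≤ j → (i', j') ∈ D

lemma Straight.cvx {D : Diagram} (h : Straight D) : Cvx D :=
  fun _ _ _ _ _ _ _ h' _ h2 _ h4 => h _ _ _ _ h' h2 h4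

/-- The filling of `D` by row indices. -/
def rowFill (D : Diagram) (c : ℕ × ℕ) : ℕ := if c ∈ D then c.1 else 0

lemma rowFill_mem {n : ℕ} {D : Diagram} (hD : Straight D) (hn : ∀ c ∈ D, c.1 < n) :
    rowFill D ∈ lats n D := by
  classical
  rw [lats, mem_filter, mem_tabs]
  refine ⟨⟨⟨?_, ?_⟩, ?_, ?_⟩, ?_⟩
  · intro i j h h'
    simp [rowFill, h, h']
  · intro i j h h'
    simp [rowFill, h, h']
  · intro c hc
    simpa [rowFill, hc] using hn c hc
  · intro c hc
    simp [rowFill, hc]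
  · intro c hc v
    refine Finset.card_le_card_of_injOn (fun c => (c.1 - 1, c.2)) ?_ ?_
    · rintro ⟨i, j⟩ hx
      obtain ⟨h1, h2, h3⟩ := mem_filter.1 (Finset.mem_coe.1 hx)
      refine Finset.mem_coe.2 (mem_filter.2 ?_)
      have m : (i - 1, j) ∈ D := hD _ _ _ _ h1 (by omega) le_rfl
      simp only [rowFill, if_pos h1, if_pos m, ReadBefore] at *
      exact ⟨m, by omega, by omega⟩
    · rintro ⟨i, j⟩ hx ⟨i', j'⟩ hx' he
      obtain ⟨h1, -, h3⟩ := mem_filter.1 (Finset.mem_coe.1 hx)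
      obtain ⟨h1', -, h3'⟩ := mem_filter.1 (Finset.mem_coe.1 hx')
      simp only [rowFill, if_pos h1, if_pos h1', Prod.mk.injEq] at *
      omega

/-- A partition shape has exactly one lattice filling. -/
lemma lats_straight {n : ℕ} {D : Diagram} (hD : Straight D) (hn : ∀ c ∈ D, c.1 < n) :
    lats n D = {rowFill D} := by
  classical
  refine Finset.eq_singleton_iff_unique_mem.2 ⟨rowFill_mem hD hn, fun T hT => ?_⟩
  rw [lats, mem_filter, mem_tabs] at hT
  obtain ⟨⟨hs, -, h0⟩, hl⟩ := hT
  have key : ∀ i j, (i, j) ∈ D → T (i, j) = i := by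
    intro i
    induction i using Nat.strong_induction_on with
    | _ i ih =>
      intro j hj
      have ge := ss_le hD.cvx hs (hD i j 0 j hj (Nat.zero_le _) le_rfl) hj (Nat.zero_le _) le_rfl
      by_contra hne
      -- the entry ending row `i` has no smaller entry `≥ i` read before it
      obtain ⟨⟨i', jm⟩, hm, hmax⟩ := Finset.exists_max_image (D.filter (fun c => c.1 = i)) Prod.snd
        ⟨(i, j), mem_filter.2 ⟨hj, rfl⟩⟩
      obtain ⟨hmD, hi⟩ := mem_filter.1 hm
      simp only at hi
      subst hi
      simp only at hmax
      have le := ss_le hD.cvx hs hj hmD le_rfl (hmax (i', j) (mem_filter.2 ⟨hj, rfl⟩))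
      obtain ⟨v, hv⟩ : ∃ v, T (i', jm) = v + 1 := ⟨T (i', jm) - 1, by omega⟩
      have pos : 0 < (D.filter (fun c' => ReadBefore c' (i', jm) ∧ T c' = v + 1)).card :=
        Finset.card_pos.2 ⟨(i', jm), mem_filter.2 ⟨hmD, Or.inr ⟨rfl, le_rfl⟩, hv⟩⟩
      obtain ⟨⟨a, b⟩, hc⟩ := Finset.card_pos.1 (pos.trans_le (hl _ hmD v))
      obtain ⟨h1, h2, h3⟩ := mem_filter.1 hc
      rcases h2 with h2 | ⟨h2, h2'⟩
      · have := ih a h2 b h1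
        omega
      · simp only at h2 h2'
        subst h2
        have := hmax (a, b) (mem_filter.2 ⟨h1, rfl⟩)
        simp only at this
        obtain rfl : b = jm := by omega
        omega
  funext c
  by_cases hc : c ∈ D
  · rw [rowFill, if_pos hc]; exact key _ _ hc
  · rw [rowFill, if_neg hc]; exact h0 c hc

lemma alt_mul_sp_straight {n : ℕ} {D : Diagram} (hD : Straight D) (hn : ∀ c ∈ D, c.1 < n) :
    alt (del n) * sp n D = alt (fun i => del n i + rowContent D i) := by
  rw [alt_mul_sp_eq_lats hD.cvx, lats_straight hD hn, Finset.sum_singleton]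
  congr 1
  funext i
  rw [rowContent_eq, con_apply, cnt, cnt]
  congr 2
  apply Finset.filter_congr
  intro c hc
  rw [rowFill, if_pos hc]

/-! ### Rotation -/

/-- `T ∘ f` on `A`, extended by zero. -/
def pull (A : Diagram) (f : ℕ × ℕ → ℕ × ℕ) (T : ℕ × ℕ → ℕ) (c : ℕ × ℕ) : ℕ :=
  if c ∈ A then T (f c) else 0

/-- Rotation of cells by 180 degrees inside an `h × w` rectangle. -/
def rot (h w : ℕ) (c : ℕ × ℕ) : ℕ × ℕ := (h - 1 - c.1, w - 1 - c.2)

/-- Rotation of a filling by 180 degrees, with the entries `0, …, n - 1` reversed. -/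
def flip (n : ℕ) (A : Diagram) (h w : ℕ) (T : ℕ × ℕ → ℕ) : ℕ × ℕ → ℕ :=
  pull A (rot h w) fun c => n - 1 - T c

lemma flip_mem {n h w : ℕ} {A B : Diagram} (hA : ∀ c ∈ A, rot h w c ∈ B ∧ c.1 < h ∧ c.2 < w)
    {T : ℕ × ℕ → ℕ} (hT : T ∈ tabs n B) : flip n A h w T ∈ tabs n A := by
  rw [mem_tabs] at *
  obtain ⟨hs, hn, -⟩ := hT
  refine ⟨⟨?_, ?_⟩, ?_, ?_⟩
  · intro i j h1 h2
    have a1 := hA _ h1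
    have a2 := hA _ h2
    simp only [flip, pull, if_pos h1, if_pos h2]
    have e : rot h w (i, j) = (h - 1 - i, w - 1 - (j + 1) + 1) := by
      simp only [rot]; ext <;> simp; omega
    rw [e] at a1 ⊢
    have := hs.1 _ _ a2.1 a1.1
    simp only [rot] at *
    omega
  · intro i j h1 h2
    have a1 := hA _ h1
    have a2 := hA _ h2
    simp only [flip, pull, if_pos h1, if_pos h2]
    have e : rot h w (i, j) = (h - 1 - (i + 1) + 1, w - 1 - j) := by
      simp only [rot]; ext <;> simp; omega
    rw [e] at a1 ⊢
    have := hs.2 _ _ a2.1 a1.1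
    have := hn _ a1.1
    simp only [rot] at *
    omega
  · intro c hc
    have := hn _ (hA c hc).1
    simp only [flip, pull, if_pos hc]
    omega
  · intro c hc
    simp [flip, pull, hc]

lemma rot_rot {h w : ℕ} {c : ℕ × ℕ} (h1 : c.1 < h) (h2 : c.2 < w) : rot h w (rot h w c) = c := by
  ext <;> simp only [rot] <;> omega

lemma flip_flip {n h w : ℕ} {A B : Diagram} (hA : ∀ c ∈ A, rot h w c ∈ B ∧ c.1 < h ∧ c.2 < w)
    {T : ℕ × ℕ → ℕ} (hT : T ∈ tabs n A) : flip n A h w (flip n B h w T) = T := by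
  funext c
  rw [mem_tabs] at hT
  by_cases hc : c ∈ A
  · have a := hA c hc
    have := hT.2.1 c hc
    simp only [flip, pull, if_pos hc, if_pos a.1, rot_rot a.2.1 a.2.2]
    omega
  · simp only [flip, pull, if_neg hc, hT.2.2 c hc]

lemma cnt_flip {n h w : ℕ} {A B : Diagram} (hA : ∀ c ∈ A, rot h w c ∈ B ∧ c.1 < h ∧ c.2 < w)
    (hB : ∀ c ∈ B, rot h w c ∈ A ∧ c.1 < h ∧ c.2 < w)
    {T : ℕ × ℕ → ℕ} (hT : T ∈ tabs n B) (v : Fin n) :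
    cnt A (flip n A h w T) v = cnt B T (Fin.revPerm v : Fin n) := by
  rw [mem_tabs] at hT
  refine Finset.card_bij' (fun c _ => rot h w c) (fun c _ => rot h w c) ?_ ?_ ?_ ?_
  · intro c hc
    obtain ⟨h1, h2⟩ := mem_filter.1 hc
    have := hT.2.1 _ (hA c h1).1
    refine mem_filter.2 ⟨(hA c h1).1, ?_⟩
    simp only [flip, pull, if_pos h1, Fin.revPerm_apply, Fin.val_rev] at *
    omega
  · intro c hc
    obtain ⟨h1, h2⟩ := mem_filter.1 hc
    have b := hB c h1
    refine mem_filter.2 ⟨b.1, ?_⟩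
    simp only [flip, pull, if_pos b.1, rot_rot b.2.1 b.2.2, Fin.revPerm_apply, Fin.val_rev] at *
    omega
  · intro c hc
    have := hA c (mem_filter.1 hc).1
    exact rot_rot this.2.1 this.2.2
  · intro c hc
    have := hB c (mem_filter.1 hc).1
    exact rot_rot this.2.1 this.2.2

/-- Rotation invariance, from the symmetry of Schur polynomials under reversing the variables. -/
lemma sp_rotD {n : ℕ} {D : Diagram} (hD : Cvx D) : sp n (rotD D) = sp n D := by
  have hB : ∀ c ∈ D, rot (ht D) (wd D) c ∈ rotD D ∧ c.1 < ht D ∧ c.2 < wd D := fun c hc =>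
    ⟨Finset.mem_image_of_mem _ hc, Finset.le_sup (f := fun c : ℕ × ℕ => c.1 + 1) hc,
      Finset.le_sup (f := fun c : ℕ × ℕ => c.2 + 1) hc⟩
  have hA : ∀ c ∈ rotD D, rot (ht D) (wd D) c ∈ D ∧ c.1 < ht D ∧ c.2 < wd D := by
    intro c hc
    obtain ⟨b, hb, rfl⟩ := Finset.mem_image.1 hc
    have := hB b hb
    refine ⟨?_, by simp only; omega, by simp only; omega⟩
    have e := rot_rot this.2.1 this.2.2
    simp only [rot] at e ⊢
    rwa [e]
  rw [sp, sp, ← sum_perm hD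
    (fun u => ∏ i : Fin n, (MvPolynomial.X i : MvPolynomial (Fin n) ℤ) ^ u i) Fin.revPerm]
  refine (Finset.sum_bij' (fun T _ => flip n (rotD D) (ht D) (wd D) T)
    (fun T _ => flip n D (ht D) (wd D) T) (fun T hT => flip_mem hA hT) (fun T hT => flip_mem hB hT)
    (fun T hT => flip_flip hB hT) (fun T hT => flip_flip hA hT) ?_).symm
  intro T hT
  refine Finset.prod_congr rfl fun i _ => ?_
  rw [cnt_flip hA hB hT]

/-! ### Coefficients of Schur functions -/

lemma card_ssyt {n : ℕ} {D : Diagram} (P : (ℕ × ℕ → ℕ) → Prop) [DecidablePred P]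
    (hP : ∀ T : SSYT D, P T.entry → ∀ c ∈ D, T.entry c < n) :
    Nat.card {T : SSYT D // P T.entry} = ((tabs n D).filter P).card := by
  rw [← Fintype.card_coe, ← Nat.card_eq_fintype_card]
  refine Nat.card_congr ⟨fun T => ⟨T.1.entry, mem_filter.2 ⟨mem_tabs.2
      ⟨⟨T.1.rowWeak, T.1.colStrict⟩, hP T.1 T.2, T.1.zero_outside⟩, T.2⟩⟩,
    fun T => ⟨⟨T.1, (mem_tabs.1 (mem_filter.1 T.2).1).1.1, (mem_tabs.1 (mem_filter.1 T.2).1).1.2,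
      (mem_tabs.1 (mem_filter.1 T.2).1).2.2⟩, (mem_filter.1 T.2).2⟩, fun T => rfl, fun T => rfl⟩

lemma con_bound {D : Diagram} {T : ℕ × ℕ → ℕ} {n : ℕ} (h : ∀ v, n ≤ v → con D T v = 0) :
    ∀ c ∈ D, T c < n := by
  intro c hc
  by_contra hlt
  exact con_ne_zero.2 ⟨c, hc, rfl⟩ (h _ (not_lt.1 hlt))

open Classical in
lemma schurOf_eq_card {n : ℕ} {D : Diagram} {d : ℕ →₀ ℕ} (hd : ∀ v, n ≤ v → d v = 0) :
    schurOf D d = (((tabs n D).filter (fun T => con D T = d)).card : ℤ) := by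
  rw [← card_ssyt (fun T => con D T = d)]
  · rfl
  · rintro T rfl
    exact con_bound hd

open Classical in
lemma schurOf_eq_coeff {n : ℕ} {D : Diagram} {d : ℕ →₀ ℕ} (hd : ∀ v, n ≤ v → d v = 0) :
    schurOf D d =
      MvPolynomial.coeff (Finsupp.equivFunOnFinite.symm fun i : Fin n => d i) (sp n D) := by
  have mono : ∀ T : ℕ × ℕ → ℕ, ∏ i : Fin n, (MvPolynomial.X i : MvPolynomial (Fin n) ℤ) ^ cnt D T i =
      MvPolynomial.monomial (Finsupp.equivFunOnFinite.symm fun i : Fin n => cnt D T i) 1 := by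
    intro T
    rw [MvPolynomial.monomial_eq, Finsupp.prod_fintype _ _ (by simp)]
    simp
  rw [schurOf_eq_card hd, sp, MvPolynomial.coeff_sum, Finset.card_filter, Nat.cast_sum]
  refine Finset.sum_congr rfl fun T hT => ?_
  rw [mono, MvPolynomial.coeff_monomial, Nat.cast_ite, Nat.cast_one, Nat.cast_zero]
  refine if_congr ?_ rfl rfl
  rw [Finsupp.equivFunOnFinite.symm.injective.eq_iff]
  constructor
  · rintro rfl
    funext i
    rw [con_apply]
  · intro h
    ext v
    by_cases hv : v < n
    · rw [con_apply]
      exact congrFun h ⟨v, hv⟩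
    · rw [hd v (by omega)]
      by_contra hne
      obtain ⟨c, hc, rfl⟩ := con_ne_zero.1 hne
      exact hv ((mem_tabs.1 hT).2.1 c hc)

/-- A lattice filling uses every value below each of its entries. -/
lemma lat_bound {D : Diagram} {T : ℕ × ℕ → ℕ} (h : Lat D T) : ∀ c ∈ D, T c < D.card := by
  have key : ∀ v, (∃ c ∈ D, T c = v) → Finset.range (v + 1) ⊆ D.image T := by
    intro v
    induction v with
    | zero =>
      rintro ⟨c, hc, hv⟩ x hx
      obtain rfl : x = 0 := by simpa using hx
      exact Finset.mem_image.2 ⟨c, hc, hv⟩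
    | succ v ih =>
      rintro ⟨c, hc, hv⟩
      have pos : 0 < (D.filter (fun c' => ReadBefore c' c ∧ T c' = v + 1)).card :=
        Finset.card_pos.2 ⟨c, mem_filter.2 ⟨hc, Or.inr ⟨rfl, le_rfl⟩, hv⟩⟩
      obtain ⟨b, hb⟩ := Finset.card_pos.1 (pos.trans_le (h _ hc v))
      obtain ⟨h1, -, h3⟩ := mem_filter.1 hb
      rw [Finset.range_add_one]
      exact Finset.insert_subset (Finset.mem_image.2 ⟨c, hc, hv⟩) (ih ⟨b, h1, h3⟩)
  intro c hc
  have := Finset.card_le_card (key _ ⟨c, hc, rfl⟩)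
  have := Finset.card_image_le (s := D) (f := T)
  simp only [Finset.card_range] at *
  omega

lemma lats_eq {n : ℕ} {D : Diagram} (hn : D.card ≤ n) : lats n D = lats D.card D := by
  classical
  ext T
  simp only [lats, mem_filter, mem_tabs]
  constructor
  · rintro ⟨⟨h1, -, h2⟩, h3⟩
    exact ⟨⟨h1, lat_bound h3, h2⟩, h3⟩
  · rintro ⟨⟨h1, h, h2⟩, h3⟩
    exact ⟨⟨h1, fun c hc => (h c hc).trans_le hn, h2⟩, h3⟩

open Classical in
lemma lrCount_eq (D : Diagram) (d : ℕ →₀ ℕ) :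
    lrCount D d = ((lats D.card D).filter (fun T => con D T = d)).card := by
  rw [lats, Finset.filter_filter, ← card_ssyt (fun T => Lat D T ∧ con D T = d)]
  · rfl
  · exact fun T hT => lat_bound hT.1

/-! ### Fat staircases -/

lemma mem_diagramOfRows {L : List ℕ} {i j : ℕ} :
    (i, j) ∈ diagramOfRows L ↔ j < L.getD i 0 := by
  simp only [diagramOfRows, Finset.mem_biUnion, Finset.mem_image, Finset.mem_range, Prod.mk.injEq]
  constructor
  · rintro ⟨a, -, b, hb, rfl, rfl⟩
    exact hb
  · intro h
    refine ⟨i, ?_, j, h, rfl, rfl⟩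
    by_contra hlt
    rw [List.getD_eq_default _ _ (not_lt.1 hlt)] at h
    omega

lemma rowContent_diagramOfRows (L : List ℕ) (i : ℕ) : rowContent (diagramOfRows L) i = L.getD i 0 := by
  rw [rowContent_eq, con_apply, cnt]
  have : (diagramOfRows L).filter (fun c => c.1 = i) =
      (Finset.range (L.getD i 0)).image (fun j => (i, j)) := by
    ext ⟨a, b⟩
    simp only [mem_filter, mem_diagramOfRows, Finset.mem_image, Finset.mem_range, Prod.mk.injEq]
    constructor
    · rintro ⟨h, rfl⟩
      exact ⟨b, h, rfl, rfl⟩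
    · rintro ⟨b, h, rfl, rfl⟩
      exact ⟨h, rfl⟩
  rw [this, Finset.card_image_of_injective _ (fun a b h => by simpa using h), Finset.card_range]

lemma staircaseRows_concat (α : List ℕ) (a : ℕ) :
    staircaseRows (α ++ [a]) = List.replicate a (α.length + 1) ++ staircaseRows α := by
  simp only [staircaseRows, List.length_append, List.length_singleton, List.range_succ,
    List.reverse_append, List.reverse_singleton, List.map_append, List.map_cons, List.map_nil,
    List.flatten_append, List.flatten_cons, List.flatten_nil, List.append_nil]
  congr 2
  · simp
  · refine List.map_congr_left fun i hi => ?_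
    rw [List.getD_append]
    simpa using hi

lemma staircaseRows_spec (α : List ℕ) : (staircaseRows α).Pairwise (· ≥ ·) ∧
    (∀ x ∈ staircaseRows α, 0 < x ∧ x ≤ α.length) ∧
    ∀ i, (staircaseRows α).count (i + 1) = α.getD i 0 := by
  induction α using List.reverseRecOn with
  | nil => simp [staircaseRows]
  | append_singleton α a ih =>
    obtain ⟨h1, h2, h3⟩ := ih
    rw [staircaseRows_concat]
    refine ⟨?_, ?_, ?_⟩
    · rw [List.pairwise_append]
      refine ⟨by simp [List.pairwise_replicate], h1, ?_⟩
      intro x hx y hy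
      rw [List.eq_of_mem_replicate hx]
      have := (h2 y hy).2
      omega
    · intro x hx
      rw [List.length_append, List.length_singleton]
      rcases List.mem_append.1 hx with hx | hx
      · rw [List.eq_of_mem_replicate hx]; omega
      · have := h2 x hx; omega
    · intro i
      rw [List.count_append, h3, List.count_replicate]
      rcases lt_trichotomy i α.length with h | rfl | h
      · rw [List.getD_append _ _ _ _ h, if_neg (by simp; omega), zero_add]
      · simp
      · rw [List.getD_eq_default _ _ h.le, List.getD_eq_default _ _ (by simp; omega),
          if_neg (by simp; omega)]

lemma fatStaircase_straight (α : List ℕ) : Straight (fatStaircase α) := by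
  intro i j i' j' h hi hj
  rw [fatStaircase, mem_diagramOfRows] at *
  have hlt : i < (staircaseRows α).length := by
    by_contra hlt
    rw [List.getD_eq_default _ _ (not_lt.1 hlt)] at h
    omega
  rw [List.getD_eq_getElem _ _ hlt] at h
  rw [List.getD_eq_getElem _ _ (hi.trans_lt hlt)]
  rcases hi.eq_or_lt with rfl | hi
  · omega
  · have := List.pairwise_iff_getElem.1 (staircaseRows_spec α).1 i' i (by omega) hlt hi
    omega

lemma list_eq_of_getD {L : List ℕ} : ∀ {M : List ℕ}, (∀ x ∈ L, 0 < x) → (∀ x ∈ M, 0 < x) →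
    (∀ i, L.getD i 0 = M.getD i 0) → L = M := by
  induction L with
  | nil =>
    rintro (_ | ⟨b, M⟩) - hM h
    · rfl
    · have := h 0
      have := hM b (by simp)
      simp at *
      omega
  | cons a L ih =>
    rintro (_ | ⟨b, M⟩) hL hM h
    · have := h 0
      have := hL a (by simp)
      simp at *
      omega
    · have h0 := h 0
      simp only [List.getD_cons_zero] at h0
      have hLM : L = M := ih (fun x hx => hL x (List.mem_cons_of_mem _ hx))
        (fun x hx => hM x (List.mem_cons_of_mem _ hx)) (fun i => by simpa using h (i + 1))
      rw [h0, hLM]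

/-- A fat staircase determines its composition. -/
lemma fatStaircase_inj {α β : List ℕ} (hα : ∀ a ∈ α, 0 < a) (hβ : ∀ a ∈ β, 0 < a)
    (h : rowContent (fatStaircase α) = rowContent (fatStaircase β)) : α = β := by
  have hs : staircaseRows α = staircaseRows β := by
    refine list_eq_of_getD (fun x hx => ((staircaseRows_spec α).2.1 x hx).1)
      (fun x hx => ((staircaseRows_spec β).2.1 x hx).1) fun i => ?_
    rw [← rowContent_diagramOfRows, ← rowContent_diagramOfRows]
    exact DFunLike.congr_fun h i
  refine list_eq_of_getD hα hβ fun i => ?_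
  rw [← (staircaseRows_spec α).2.2, ← (staircaseRows_spec β).2.2, hs]

/-- The composition `α(ν)` of a fat staircase `ν`; junk for other contents. -/
noncomputable def comp (d : ℕ →₀ ℕ) : List ℕ :=
  open Classical in if h : IsFatStaircase d then h.choose else []

lemma comp_spec {d : ℕ →₀ ℕ} (h : IsFatStaircase d) :
    (∀ a ∈ comp d, 0 < a) ∧ d = rowContent (fatStaircase (comp d)) := by
  rw [comp, dif_pos h]
  exact h.choose_spec

/-! ### Schur functions of sums of fat staircases -/

lemma fat_of_mem_lats {D : Diagram} (hfat : IsSumOfFatStaircases D) {T : ℕ × ℕ → ℕ}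
    (hT : T ∈ lats D.card D) : IsFatStaircase (con D T) := by
  classical
  apply hfat
  rw [lrCount_eq]
  exact Finset.card_ne_zero.2 ⟨T, mem_filter.2 ⟨hT, rfl⟩⟩

/-- The Littlewood–Richardson rule in finitely many variables: after multiplication by `a_δ`, both
sides are the same sum of alternants. -/
lemma sp_eq_sum {n : ℕ} {D : Diagram} (hD : Cvx D) (hfat : IsSumOfFatStaircases D)
    (hn : D.card ≤ n) :
    sp n D = ∑ T ∈ lats D.card D, sp n (rotD (fatStaircase (comp (con D T)))) := by
  apply mul_left_cancel₀ (alt_del_ne_zero n)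
  rw [alt_mul_sp_eq_lats hD, Finset.mul_sum, lats_eq hn]
  refine Finset.sum_congr rfl fun T hT => ?_
  have e := (comp_spec (fat_of_mem_lats hfat hT)).2
  rw [sp_rotD (fatStaircase_straight _).cvx, alt_mul_sp_straight (fatStaircase_straight _), ← e]
  · simp only [con_apply]
  · intro c hc
    have : con D T c.1 ≠ 0 := by
      rw [e, rowContent_eq, con_ne_zero]
      exact ⟨c, hc, rfl⟩
    obtain ⟨b, hb, hbc⟩ := con_ne_zero.1 this
    classical
    rw [← hbc]
    exact (lat_bound (mem_filter.1 hT).2 b hb).trans_le hn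

lemma exists_bound (d : ℕ →₀ ℕ) (m : ℕ) : ∃ n, m ≤ n ∧ ∀ v, n ≤ v → d v = 0 := by
  refine ⟨m + (d.support.sup id + 1), by omega, fun v hv => ?_⟩
  by_contra hne
  have := Finset.le_sup (f := id) (Finsupp.mem_support_iff.2 hne)
  simp only [id] at this
  omega

lemma schurOf_eq_sum {D : Diagram} (hD : Cvx D) (hfat : IsSumOfFatStaircases D) :
    schurOf D = ∑ T ∈ lats D.card D, schurOf (rotD (fatStaircase (comp (con D T)))) := by
  funext d
  obtain ⟨n, hn, hd⟩ := exists_bound d D.card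
  have : (∑ T ∈ lats D.card D, schurOf (rotD (fatStaircase (comp (con D T))))) d =
      ∑ T ∈ lats D.card D, schurOf (rotD (fatStaircase (comp (con D T)))) d :=
    map_sum (MvPowerSeries.coeff d) _ _
  rw [this, schurOf_eq_coeff hd, sp_eq_sum hD hfat hn, MvPolynomial.coeff_sum]
  exact Finset.sum_congr rfl fun T _ => (schurOf_eq_coeff hd).symm

/-! ### Products of Schur functions -/

/-- `T` on `A`, extended by zero. -/
def res (A : Diagram) (T : ℕ × ℕ → ℕ) (c : ℕ × ℕ) : ℕ := if c ∈ A then T c else 0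

lemma con_congr {A : Diagram} {T T' : ℕ × ℕ → ℕ} (h : ∀ c ∈ A, T c = T' c) : con A T = con A T' :=
  Finset.sum_congr rfl fun c hc => by rw [h c hc]

lemma res_mem {n : ℕ} {A B : Diagram} (hAB : A ⊆ B) {T : ℕ × ℕ → ℕ} (hT : T ∈ tabs n B) :
    res A T ∈ tabs n A := by
  rw [mem_tabs] at *
  refine ⟨⟨?_, ?_⟩, ?_, ?_⟩
  · intro i j h h'
    simpa only [res, if_pos h, if_pos h'] using hT.1.1 _ _ (hAB h) (hAB h')
  · intro i j h h'
    simpa only [res, if_pos h, if_pos h'] using hT.1.2 _ _ (hAB h) (hAB h')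
  · intro c h
    simpa only [res, if_pos h] using hT.2.1 _ (hAB h)
  · intro c h
    simp only [res, if_neg h]

/-- Schur functions of diagrams with no adjacent cells multiply. -/
lemma schurOf_union {A B : Diagram} (hd : Disjoint A B)
    (hn : ∀ a ∈ A, ∀ b ∈ B, ¬ AdjCell a b) : schurOf (A ∪ B) = schurOf A * schurOf B := by
  classical
  have cA : ∀ {S T : ℕ × ℕ → ℕ} {n}, S ∈ tabs n A → T ∈ tabs n B → ∀ c ∈ A, (S + T) c = S c := by
    intro S T n hS hT c hc
    simp [(mem_tabs.1 hT).2.2 c (Finset.disjoint_left.1 hd hc)]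
  have cB : ∀ {S T : ℕ × ℕ → ℕ} {n}, S ∈ tabs n A → T ∈ tabs n B → ∀ c ∈ B, (S + T) c = T c := by
    intro S T n hS hT c hc
    simp [(mem_tabs.1 hS).2.2 c (Finset.disjoint_right.1 hd hc)]
  have glue : ∀ {S T : ℕ × ℕ → ℕ} {n}, S ∈ tabs n A → T ∈ tabs n B → S + T ∈ tabs n (A ∪ B) := by
    intro S T n hS hT
    have a := cA hS hT
    have b := cB hS hT
    have hS' := mem_tabs.1 hS
    have hT' := mem_tabs.1 hT
    rw [mem_tabs]
    refine ⟨⟨?_, ?_⟩, ?_, ?_⟩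
    · intro i j h h'
      rcases Finset.mem_union.1 h with h | h <;> rcases Finset.mem_union.1 h' with h' | h'
      · rw [a _ h, a _ h']; exact hS'.1.1 _ _ h h'
      · exact absurd (Or.inl ⟨rfl, Or.inl rfl⟩) (hn _ h _ h')
      · exact absurd (Or.inl ⟨rfl, Or.inr rfl⟩) (hn _ h' _ h)
      · rw [b _ h, b _ h']; exact hT'.1.1 _ _ h h'
    · intro i j h h'
      rcases Finset.mem_union.1 h with h | h <;> rcases Finset.mem_union.1 h' with h' | h'
      · rw [a _ h, a _ h']; exact hS'.1.2 _ _ h h'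
      · exact absurd (Or.inr ⟨rfl, Or.inl rfl⟩) (hn _ h _ h')
      · exact absurd (Or.inr ⟨rfl, Or.inr rfl⟩) (hn _ h' _ h)
      · rw [b _ h, b _ h']; exact hT'.1.2 _ _ h h'
    · intro c h
      rcases Finset.mem_union.1 h with h | h
      · rw [a _ h]; exact hS'.2.1 _ h
      · rw [b _ h]; exact hT'.2.1 _ h
    · intro c h
      rw [Finset.mem_union, not_or] at h
      simp [hS'.2.2 c h.1, hT'.2.2 c h.2]
  have hcon : ∀ T, con (A ∪ B) T = con A T + con B T := fun T => Finset.sum_union hd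
  funext d
  obtain ⟨n, -, hdn⟩ := exists_bound d 0
  have hmul : (schurOf A * schurOf B) d =
      ∑ p ∈ Finset.HasAntidiagonal.antidiagonal d, schurOf A p.1 * schurOf B p.2 :=
    MvPowerSeries.coeff_mul d (schurOf A) (schurOf B)
  rw [hmul, schurOf_eq_card hdn, Finset.card_eq_sum_card_fiberwise
    (f := fun U => (con A U, con B U)) (t := Finset.HasAntidiagonal.antidiagonal d), Nat.cast_sum]
  swap
  · intro U hU
    rw [Finset.mem_coe, Finset.HasAntidiagonal.mem_antidiagonal, ← (mem_filter.1 (Finset.mem_coe.1 hU)).2, hcon]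
  refine Finset.sum_congr rfl ?_
  rintro ⟨p, q⟩ hpq
  rw [Finset.HasAntidiagonal.mem_antidiagonal] at hpq
  simp only at hpq
  have hz : ∀ v, n ≤ v → p v = 0 ∧ q v = 0 := by
    intro v hv
    have := hdn v hv
    rw [← hpq, Finsupp.add_apply] at this
    omega
  rw [schurOf_eq_card fun v hv => (hz v hv).1, schurOf_eq_card fun v hv => (hz v hv).2,
    ← Nat.cast_mul, ← Finset.card_product]
  congr 1
  refine Finset.card_bij' (fun U _ => (res A U, res B U)) (fun P _ => P.1 + P.2) ?_ ?_ ?_ ?_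
  · intro U hU
    obtain ⟨h1, he⟩ := mem_filter.1 hU
    have h2 := (mem_filter.1 h1).1
    obtain ⟨rfl, rfl⟩ := Prod.mk.inj he
    refine Finset.mem_product.2 ⟨mem_filter.2 ⟨res_mem Finset.subset_union_left h2, ?_⟩,
      mem_filter.2 ⟨res_mem Finset.subset_union_right h2, ?_⟩⟩
    · exact con_congr fun c hc => if_pos hc
    · exact con_congr fun c hc => if_pos hc
  · rintro ⟨S, T⟩ hP
    obtain ⟨h1, h2⟩ := Finset.mem_product.1 hP
    obtain ⟨hS, e1⟩ := mem_filter.1 h1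
    obtain ⟨hT, e2⟩ := mem_filter.1 h2
    simp only at hS hT e1 e2
    have e3 := (con_congr (cA hS hT)).trans e1
    have e4 := (con_congr (cB hS hT)).trans e2
    refine mem_filter.2 ⟨mem_filter.2 ⟨glue hS hT, ?_⟩, ?_⟩
    · rw [hcon, e3, e4, hpq]
    · rw [e3, e4]
  · intro U hU
    have h0 := (mem_tabs.1 (mem_filter.1 (mem_filter.1 hU).1).1).2.2
    funext c
    by_cases hA : c ∈ A
    · simp [res, hA, Finset.disjoint_left.1 hd hA]
    · by_cases hB : c ∈ B
      · simp [res, hA, hB]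
      · simp [res, hA, hB, h0 c]
  · rintro ⟨S, T⟩ hP
    obtain ⟨h1, h2⟩ := Finset.mem_product.1 hP
    have hS := (mem_filter.1 h1).1
    have hT := (mem_filter.1 h2).1
    simp only at hS hT
    ext c
    · by_cases hA : c ∈ A
      · simp only [res, if_pos hA, cA hS hT c hA]
      · simp only [res, if_neg hA, (mem_tabs.1 hS).2.2 c hA]
    · by_cases hB : c ∈ B
      · simp only [res, if_pos hB, cB hS hT c hB]
      · simp only [res, if_neg hB, (mem_tabs.1 hT).2.2 c hB]

lemma schurOf_translate (D : Diagram) (a b : ℕ) :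
    schurOf (D.image fun c => (c.1 + a, c.2 + b)) = schurOf D := by
  classical
  funext d
  obtain ⟨n, -, hd⟩ := exists_bound d 0
  rw [schurOf_eq_card hd, schurOf_eq_card hd]
  congr 1
  set A := D.image fun c => (c.1 + a, c.2 + b) with hA
  have mA : ∀ i j, (i + a, j + b) ∈ A ↔ (i, j) ∈ D := by
    intro i j
    simp [hA]
  have exA : ∀ c ∈ A, ∃ i j, c = (i + a, j + b) := by
    intro c hc
    obtain ⟨x, -, rfl⟩ := Finset.mem_image.1 hc
    exact ⟨_, _, rfl⟩
  have hcon : ∀ T : ℕ × ℕ → ℕ, con A T = con D fun c => T (c.1 + a, c.2 + b) := by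
    intro T
    rw [con, hA, Finset.sum_image]
    · rfl
    · rintro ⟨i, j⟩ _ ⟨i', j'⟩ _ h
      simpa using h
  refine Finset.card_bij' (fun T _ => pull D (fun c => (c.1 + a, c.2 + b)) T)
    (fun T _ => pull A (fun c => (c.1 - a, c.2 - b)) T) ?_ ?_ ?_ ?_
  · intro T hT
    obtain ⟨hT, he⟩ := mem_filter.1 hT
    rw [mem_tabs] at hT
    refine mem_filter.2 ⟨mem_tabs.2 ⟨⟨?_, ?_⟩, ?_, ?_⟩, ?_⟩
    · intro i j h h'
      simp only [pull, if_pos h, if_pos h']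
      have := hT.1.1 (i + a) (j + b) ((mA _ _).2 h)
      rw [show j + 1 + b = j + b + 1 by omega]
      exact this (by rw [show j + b + 1 = j + 1 + b by omega]; exact (mA _ _).2 h')
    · intro i j h h'
      simp only [pull, if_pos h, if_pos h']
      have := hT.1.2 (i + a) (j + b) ((mA _ _).2 h)
      rw [show i + 1 + a = i + a + 1 by omega]
      exact this (by rw [show i + a + 1 = i + 1 + a by omega]; exact (mA _ _).2 h')
    · intro c h
      simp only [pull, if_pos h]
      exact hT.2.1 _ ((mA _ _).2 h)
    · intro c h
      simp only [pull, if_neg h]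
    · rw [← he, hcon]
      exact con_congr fun c hc => if_pos hc
  · intro T hT
    obtain ⟨hT, he⟩ := mem_filter.1 hT
    rw [mem_tabs] at hT
    refine mem_filter.2 ⟨mem_tabs.2 ⟨⟨?_, ?_⟩, ?_, ?_⟩, ?_⟩
    · intro i j h h'
      simp only [pull, if_pos h, if_pos h']
      obtain ⟨i, j, e⟩ := exA _ h
      obtain ⟨rfl, rfl⟩ := Prod.mk.inj e
      rw [show j + b + 1 = j + 1 + b by omega] at h' ⊢
      simp only [Nat.add_sub_cancel]
      exact hT.1.1 _ _ ((mA _ _).1 h) ((mA _ _).1 h')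
    · intro i j h h'
      simp only [pull, if_pos h, if_pos h']
      obtain ⟨i, j, e⟩ := exA _ h
      obtain ⟨rfl, rfl⟩ := Prod.mk.inj e
      rw [show i + a + 1 = i + 1 + a by omega] at h' ⊢
      simp only [Nat.add_sub_cancel]
      exact hT.1.2 _ _ ((mA _ _).1 h) ((mA _ _).1 h')
    · intro c h
      simp only [pull, if_pos h]
      obtain ⟨i, j, rfl⟩ := exA _ h
      simp only [Nat.add_sub_cancel]
      exact hT.2.1 _ ((mA _ _).1 h)
    · intro c h
      simp only [pull, if_neg h]
    · rw [← he, hcon]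
      refine con_congr fun c hc => ?_
      simp only [pull, if_pos ((mA _ _).2 hc), Nat.add_sub_cancel]
  · intro T hT
    have h0 := (mem_tabs.1 (mem_filter.1 hT).1).2.2
    funext c
    by_cases hc : c ∈ A
    · obtain ⟨i, j, rfl⟩ := exA _ hc
      simp only [pull, if_pos hc, Nat.add_sub_cancel, if_pos ((mA _ _).1 hc)]
    · simp only [pull, if_neg hc, h0 c hc]
  · intro T hT
    have h0 := (mem_tabs.1 (mem_filter.1 hT).1).2.2
    funext c
    by_cases hc : c ∈ D
    · simp only [pull, if_pos hc, if_pos ((mA _ _).2 hc), Nat.add_sub_cancel]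
    · simp only [pull, if_neg hc, h0 c hc]

/-- A column placed one box to the left of the bottom-left box of `E`, and below it, touches `E` in
a corner only, so that the Schur function is a product. -/
lemma schurOf_SDiagG_col (E : Diagram) (m : ℕ) :
    schurOf (SDiagG (colD m) E 1) = schurOf E * schurOf (colD m) := by
  have hE : ∀ x ∈ E.image (fun c => (c.1 + 0, c.2 + (tlCol (colD m) + 1))),
      x.1 < ht E ∧ (x.1 + 1 = ht E → x.2 ≠ blCol E) := by
    intro x hx
    obtain ⟨⟨i, j⟩, hc, rfl⟩ := Finset.mem_image.1 hx
    have h1 : i + 1 ≤ ht E := Finset.le_sup (f := fun c : ℕ × ℕ => c.1 + 1) hc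
    refine ⟨by simpa using h1, fun h2 => ?_⟩
    simp only [add_zero] at h2
    have h3 : blCol E ≤ j := Nat.sInf_le (by rw [← h2]; exact hc)
    simp only
    omega
  have hF : ∀ x ∈ (colD m).image (fun c => (c.1 + ht E, c.2 + blCol E)),
      ht E ≤ x.1 ∧ x.2 = blCol E := by
    intro x hx
    obtain ⟨c, hc, rfl⟩ := Finset.mem_image.1 hx
    obtain ⟨i, -, rfl⟩ := Finset.mem_image.1 hc
    simp
  rw [← schurOf_translate E 0 (tlCol (colD m) + 1),
    ← schurOf_translate (colD m) (ht E) (blCol E), ← schurOf_union]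
  · rfl
  · rw [Finset.disjoint_left]
    intro x h1 h2
    have := hE x h1
    have := hF x h2
    omega
  · intro x h1 y h2 h
    have := hE x h1
    have := hF y h2
    simp only [AdjCell] at h
    omega

end FatStair

/-- if `D = ρ/κ` is a sum of fat staircases and `λ = (m)` a single
row with `m − 1` at most the length of the last row of `D`, then
`s_{S(λ^t, D; 1)} = Σ_ν c^ρ_{κν} s_{S(λ^t, α(ν)^◁; 1)}`. -/
theorem schurOf_col_foundation_eq_sum (ρ κ : YoungDiagram) (hsub : κ ≤ ρ)
    (hfat : IsSumOfFatStaircases (ρ.cells \ κ.cells))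
    (m : ℕ) (hm : 1 ≤ m) (hlen : m - 1 ≤ lastRowLen (ρ.cells \ κ.cells)) :
    schurOf (SDiagG (colD m) (ρ.cells \ κ.cells) 1) =
      ∑ᶠ α : List ℕ,
        if ∀ a ∈ α, 0 < a then
          (lrCoeff ρ κ (rowContent (fatStaircase α))) •
            schurOf (SDiagG (colD m) (rotD (fatStaircase α)) 1)
        else 0 := by
  classical
  open FatStair in
  set D := ρ.cells \ κ.cells with hDdef
  have hD : Cvx D := by
    intro i j i' j' a b h h' h1 h2 h3 h4
    simp only [hDdef, Finset.mem_sdiff, YoungDiagram.mem_cells] at *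
    exact ⟨ρ.up_left_mem h2 h4 h'.1, fun hk => h.2 (κ.up_left_mem h1 h3 hk)⟩
  set f : (ℕ × ℕ → ℕ) → List ℕ := fun T => comp (con D T) with hf
  -- the coefficient of `α` counts the lattice fillings `T` with `f T = α`
  have hcoef : ∀ α : List ℕ, (∀ a ∈ α, 0 < a) → lrCoeff ρ κ (rowContent (fatStaircase α)) =
      ((lats D.card D).filter (fun T => f T = α)).card := by
    intro α hα
    rw [lrCoeff, lrCount_eq]
    congr 1
    refine Finset.filter_congr fun T hT => ?_
    have hs := comp_spec (fat_of_mem_lats hfat hT)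
    constructor
    · intro h
      exact fatStaircase_inj hs.1 hα (hs.2.symm.trans h)
    · rintro rfl
      exact hs.2
  rw [finsum_eq_sum_of_support_subset (s := (lats D.card D).image f), schurOf_SDiagG_col,
    schurOf_eq_sum hD hfat, Finset.sum_mul]
  · have := Finset.sum_comp (s := lats D.card D)
      (fun α => schurOf (SDiagG (colD m) (rotD (fatStaircase α)) 1)) f
    simp only [schurOf_SDiagG_col] at this ⊢
    rw [this]
    refine Finset.sum_congr rfl fun α hα => ?_
    obtain ⟨T, hT, rfl⟩ := Finset.mem_image.1 hα
    have hs := comp_spec (fat_of_mem_lats hfat hT)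
    rw [if_pos hs.1, hcoef _ hs.1]
  · intro α hα
    rw [Function.mem_support] at hα
    have hpos : ∀ a ∈ α, 0 < a := by
      by_contra hn
      exact hα (if_neg hn)
    rw [if_pos hpos, hcoef _ hpos] at hα
    obtain ⟨T, hT⟩ := Finset.card_ne_zero.1 (left_ne_zero_of_smul hα)
    obtain ⟨h1, h2⟩ := mem_filter.1 hT
    exact Finset.mem_coe.2 (Finset.mem_image.2 ⟨T, h1, h2⟩)
end
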